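/- arXiv:math/9909142 — 2 statements merged into one kernel-verified Lean document; each statement's English description precedes it below -/
import Mathlib

section
/- Weil descent for affine schemes (algebraic form): Let k be a field of characteristic zero and K an algebraically closed field extension of k of infinite transcendence degree over k. Let R be a finitely generated commutative K-algebra equipped with a continuous semilinear action of Aut(K/k). Then the subring R₀ of elements of R fixed by every σ ∈ Aut(K/k) spans R as a K-vector space, and R₀ is a finitely generated k-algebra. -/
namespace WeilDescent

theorem extend_aux {L K K' : Type} [Field L] [Field K] [Field K'] [IsAlgClosed K] [IsAlgClosed K']
    [Algebra L K] [Algebra L K'] (h : Algebra.trdeg L K = Algebra.trdeg L K') :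
    Nonempty (K ≃ₐ[L] K') := by
  obtain ⟨s, hs⟩ := exists_isTranscendenceBasis L K
  obtain ⟨t, ht⟩ := exists_isTranscendenceBasis L K'
  have hst : Cardinal.mk s = Cardinal.mk t := by
    rw [hs.cardinalMk_eq_trdeg, ht.cardinalMk_eq_trdeg, h]
  obtain ⟨e⟩ := Cardinal.eq.1 hst
  have := IsAlgClosed.isAlgClosure_of_transcendence_basis _ hs
  have := IsAlgClosed.isAlgClosure_of_transcendence_basis _ ht
  let E : Algebra.adjoin L (Set.range ((↑) : s → K)) ≃ₐ[L]
      Algebra.adjoin L (Set.range ((↑) : t → K')) :=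
    hs.1.aevalEquiv.symm.trans ((MvPolynomial.renameEquiv L e).trans ht.1.aevalEquiv)
  let G := IsAlgClosure.equivOfEquiv K K' E.toRingEquiv
  refine ⟨AlgEquiv.ofRingEquiv (f := G) fun c => ?_⟩
  have h1 := IsAlgClosure.equivOfEquiv_algebraMap K K' E.toRingEquiv
    (algebraMap L (Algebra.adjoin L (Set.range ((↑) : s → K))) c)
  have h2 : E.toRingEquiv (algebraMap L _ c) = algebraMap L _ c := E.commutes c
  rw [h2] at h1
  exact h1

theorem extend_aux2 {F L K K' : Type} [Field F] [Field L] [Field K] [Field K']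
    [IsAlgClosed K] [IsAlgClosed K'] [Algebra F L] [Algebra F K] [Algebra F K']
    [Algebra L K] [Algebra L K'] [IsScalarTower F L K] [IsScalarTower F L K']
    (h : Algebra.trdeg F K = Algebra.trdeg F K') (hL : Algebra.trdeg F L < Cardinal.aleph0) :
    ∃ G : K ≃+* K', ∀ c : L, G (algebraMap L K c) = algebraMap L K' c := by
  suffices Nonempty (K ≃ₐ[L] K') by
    obtain ⟨G⟩ := this
    exact ⟨G.toRingEquiv, G.commutes⟩
  apply extend_aux
  have h1 := trdeg_add_eq F L (A := K)
  have h2 := trdeg_add_eq F L (A := K')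
  exact Cardinal.eq_of_add_eq_add_left (by rw [h1, h2, h]) hL

/-- Embeddings of subfields of finite transcendence degree extend to automorphisms. -/
theorem extend {F K : Type} [Field F] [Field K] [IsAlgClosed K] [Algebra F K]
    (L : IntermediateField F K) (hL : Algebra.trdeg F L < Cardinal.aleph0) (f : L →ₐ[F] K) :
    ∃ σ : K ≃ₐ[F] K, ∀ c : L, σ c = f c := by
  obtain ⟨G, hG⟩ := @extend_aux2 F L K K _ _ _ _ _ _ _ _ _ _ f.toAlgebra _
    (@IsScalarTower.of_algebraMap_eq F L K _ _ _ _ f.toAlgebra _ fun c => (f.commutes c).symm)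
    rfl hL
  refine ⟨AlgEquiv.ofRingEquiv (f := G) fun c => ?_, fun c => hG c⟩
  have := hG (algebraMap F L c)
  exact this.trans (f.commutes c)

theorem extend_indep {F K : Type} [Field F] [Field K] [IsAlgClosed K] [Algebra F K]
    {ι : Type} [Finite ι] {x y : ι → K} (hx : AlgebraicIndependent F x)
    (hy : AlgebraicIndependent F y) : ∃ σ : K ≃ₐ[F] K, ∀ i, σ (x i) = y i := by
  let L := IntermediateField.adjoin F (Set.range x)
  have : Algebra.EssFiniteType F L :=
    IntermediateField.essFiniteType_iff.2 (IntermediateField.fg_adjoin_of_finite (Set.finite_range x))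
  let f : L →ₐ[F] K := (IntermediateField.val _).comp
    (hy.aevalEquivField.toAlgHom.comp hx.aevalEquivField.symm.toAlgHom)
  obtain ⟨σ, hσ⟩ := extend L (trdeg_lt_aleph0 F L) f
  refine ⟨σ, fun i => ?_⟩
  have hi : x i ∈ L := IntermediateField.subset_adjoin _ _ ⟨i, rfl⟩
  have h1 : hx.aevalEquivField.symm ⟨x i, hi⟩ = algebraMap (MvPolynomial ι F) _ (MvPolynomial.X i) := by
    rw [AlgEquiv.symm_apply_eq]
    apply Subtype.ext
    rw [hx.aevalEquivField_algebraMap_apply_coe]; simp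
  rw [hσ ⟨x i, hi⟩]
  change ((hy.aevalEquivField (hx.aevalEquivField.symm ⟨x i, hi⟩) : _) : K) = _
  rw [h1, hy.aevalEquivField_algebraMap_apply_coe]; simp

theorem fixed_mem {F K : Type} [Field F] [CharZero F] [Field K] [IsAlgClosed K] [Algebra F K]
    (c : K) (hc : ∀ σ : K ≃ₐ[F] K, σ c = c) : c ∈ (algebraMap F K).range := by
  by_cases h : IsIntegral F c
  · have hs : (minpoly F c).Separable := (minpoly.irreducible h).separable
    have h1 := IntermediateField.card_algHom_adjoin_integral F h hs (IsAlgClosed.splits _ : 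
      ((minpoly F c).map (algebraMap F K)).Splits)
    rw [← minpoly.natDegree_eq_one_iff, ← h1]
    have : FiniteDimensional F (IntermediateField.adjoin F {c}) :=
      IntermediateField.adjoin.finiteDimensional h
    have : Subsingleton (IntermediateField.adjoin F {c} →ₐ[F] K) := by
      refine ⟨fun f g => ?_⟩
      have key : ∀ f : IntermediateField.adjoin F {c} →ₐ[F] K,
          f (IntermediateField.AdjoinSimple.gen F c) = c := by
        intro f
        obtain ⟨σ, hσ⟩ := extend _ (trdeg_lt_aleph0 F _) f
        rw [← hσ]; exact hc σ
      apply (IntermediateField.adjoin.powerBasis h).algHom_ext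
      simp [key]
    have : Nonempty (IntermediateField.adjoin F {c} →ₐ[F] K) := ⟨IntermediateField.val _⟩
    exact Nat.card_unique
  · have ht : Transcendental F c := fun h' => h h'.isIntegral
    have ht2 : Transcendental F (c + 1) := by
      intro h'
      exact ht (by simpa using h'.sub (isAlgebraic_one (R := F)))
    obtain ⟨σ, hσ⟩ := extend_indep (F := F) (ι := Unit) (x := fun _ => c) (y := fun _ => c + 1)
      (algebraicIndependent_unique_type_iff.2 ht) (algebraicIndependent_unique_type_iff.2 ht2)
    have := hσ ()
    simp [hc σ] at this


theorem fixed_mem' {k K : Type} [Field k] [CharZero k] [Field K] [IsAlgClosed K] [Algebra k K]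
    (M : IntermediateField k K) (c : K)
    (hc : ∀ σ : K ≃ₐ[k] K, (∀ x ∈ M, σ x = x) → σ c = c) : c ∈ M := by
  have : CharZero M := charZero_of_injective_algebraMap (algebraMap k M).injective
  obtain ⟨m, rfl⟩ := fixed_mem (F := M) c fun σ =>
    hc (σ.restrictScalars k) fun x hx => σ.commutes ⟨x, hx⟩
  exact m.2

/-- automorphisms fixing an intermediate field -/
theorem lift_aut {k K : Type} [Field k] [Field K] [Algebra k K]
    (M : IntermediateField k K) (σ : K ≃ₐ[k] K) (h : ∀ x ∈ M, σ x = x) :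
    ∃ σ' : K ≃ₐ[M] K, ∀ x, σ' x = σ x :=
  ⟨AlgEquiv.ofRingEquiv (f := σ.toRingEquiv) fun c => h c c.2, fun _ => rfl⟩

theorem fix_adjoin {k K : Type} [Field k] [Field K] [Algebra k K]
    (S : Set K) (σ : K ≃ₐ[k] K) (h : ∀ x ∈ S, σ x = x) :
    ∀ x ∈ IntermediateField.adjoin k S, σ x = x := by
  intro x hx
  induction hx using IntermediateField.adjoin_induction with
  | mem x hx => exact h x hx
  | algebraMap x => exact σ.commutes x
  | add x y _ _ hx hy => rw [map_add, hx, hy]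
  | inv x _ hx => rw [map_inv₀, hx]
  | mul x y _ _ hx hy => rw [map_mul, hx, hy]

/-- `z` is generic over the subfield `M`. -/
def Gen {k K ι : Type} [Field k] [Field K] [Algebra k K] (M : IntermediateField k K)
    (z : ι → K) : Prop :=
  ∀ p : MvPolynomial ι K, (∀ m, p.coeff m ∈ M) → MvPolynomial.eval z p = 0 → p = 0

theorem gen_iff {k K ι : Type} [Field k] [Field K] [Algebra k K] (M : IntermediateField k K)
    (z : ι → K) : Gen M z ↔ AlgebraicIndependent M z := by
  constructor
  · intro h
    rw [algebraicIndependent_iff]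
    intro p hp
    apply MvPolynomial.map_injective (algebraMap M K) (algebraMap M K).injective
    rw [map_zero]
    apply h
    · intro m
      rw [MvPolynomial.coeff_map]
      exact (p.coeff m).2
    · rwa [MvPolynomial.eval_map, ← MvPolynomial.aeval_def]
  · intro h p hp hz
    have : p ∈ Set.range (MvPolynomial.map (σ := ι) (algebraMap M K)) := by
      rw [MvPolynomial.mem_range_map_iff_coeffs_subset]
      intro c hc
      obtain ⟨m, -, rfl⟩ := MvPolynomial.mem_coeffs_iff.1 hc
      exact ⟨⟨_, hp m⟩, rfl⟩
    obtain ⟨q, rfl⟩ := this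
    rw [MvPolynomial.eval_map, ← MvPolynomial.aeval_def] at hz
    rw [algebraicIndependent_iff.1 h q hz, map_zero]

theorem Gen.mono {k K ι : Type} [Field k] [Field K] [Algebra k K] {M N : IntermediateField k K}
    (h : M ≤ N) {z : ι → K} (hz : Gen N z) : Gen M z :=
  fun p hp h0 => hz p (fun m => h (hp m)) h0

open scoped IntermediateField.algebraAdjoinAdjoin in
theorem algebraic_field_of_ring {M K : Type} [Field M] [Field K] [Algebra M K] {S : Set K} {a : K}
    (h : IsAlgebraic (Algebra.adjoin M S) a) : IsAlgebraic (IntermediateField.adjoin M S) a :=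
  h.extendScalars (FaithfulSMul.algebraMap_injective
      (Algebra.adjoin M S) (IntermediateField.adjoin M S))

theorem exists_gen {k K : Type} [Field k] [Field K] [Algebra k K]
    (htr : ∀ L : IntermediateField k K, L.FG → ∃ x : K, Transcendental L x)
    (M : IntermediateField k K) (hM : M.FG) (ι : Type) [Finite ι] :
    ∃ z : ι → K, Gen M z := by
  simp_rw [gen_iff]
  induction ι using Finite.induction_empty_option with
  | @of_equiv α β e h =>
    obtain ⟨z, hz⟩ := h
    exact ⟨z ∘ e.symm, hz.comp _ e.symm.injective⟩
  | h_empty =>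
    exact ⟨PEmpty.elim, algebraicIndependent_empty_type_iff.2 (algebraMap M K).injective⟩
  | @h_option α _ h =>
    obtain ⟨z, hz⟩ := h
    let N := IntermediateField.adjoin M (Set.range z)
    have h1 : Algebra.EssFiniteType k M := IntermediateField.essFiniteType_iff.2 hM
    have h2 : Algebra.EssFiniteType M N := IntermediateField.essFiniteType_iff.2
      (IntermediateField.fg_adjoin_of_finite (Set.finite_range z))
    have h3 : Algebra.EssFiniteType k N := Algebra.EssFiniteType.comp k M N
    obtain ⟨a, ha⟩ := htr (N.restrictScalars k) (IntermediateField.essFiniteType_iff.1 h3)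
    refine ⟨fun o => o.elim a z, (hz.option_iff_transcendental a).2 ?_⟩
    have ha : Transcendental N a := ha
    intro halg
    apply ha
    exact algebraic_field_of_ring halg

section action

set_option linter.unusedSectionVars false

variable {k K R : Type} [Field k] [Field K] [Algebra k K] [CommRing R] [Algebra K R]

/-- elements fixed by all automorphisms fixing `S` pointwise -/
def Fx (φ : (K ≃ₐ[k] K) →* (R ≃+* R)) (S : Set K) : Set R :=
  {r | ∀ σ : K ≃ₐ[k] K, (∀ x ∈ S, σ x = x) → φ σ r = r}

theorem Fx_congr {φ : (K ≃ₐ[k] K) →* (R ≃+* R)} {S : Set K} {r : R} (hr : r ∈ Fx φ S)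
    (σ τ : K ≃ₐ[k] K) (h : ∀ x ∈ S, σ x = τ x) : φ σ r = φ τ r := by
  have := hr (τ⁻¹ * σ) fun x hx => by
    change τ.symm (σ x) = x
    rw [h x hx]; simp
  calc φ σ r = φ (τ * (τ⁻¹ * σ)) r := by rw [mul_inv_cancel_left]
    _ = φ τ (φ (τ⁻¹ * σ) r) := by rw [map_mul]; rfl
    _ = _ := by rw [this]

variable [IsAlgClosed K] (φ : (K ≃ₐ[k] K) →* (R ≃+* R))

theorem dedekind_span {F L : Type} [Field F] [Field L] [Algebra F L] [Algebra F K]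
    [FiniteDimensional F L] :
    Submodule.span K (Set.range fun (c : L) (g : L →ₐ[F] K) => g c) = ⊤ := by
  classical
  by_contra hne
  obtain ⟨f, hf0, hf⟩ := Submodule.exists_le_ker_of_lt_top _ (lt_top_iff_ne_top.2 hne)
  have hfe : ∀ v : (L →ₐ[F] K) → K, f v = ∑ g, f (Pi.single g 1) * v g := by
    intro v
    conv_lhs => rw [pi_eq_sum_univ' v]
    simp [map_sum, mul_comm, Pi.single]
  have hli := linearIndependent_algHom_toLinearMap F L K
  rw [Fintype.linearIndependent_iff] at hli
  have h0 := hli (fun g => f (Pi.single g 1)) (by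
    ext c
    have : f (fun g : L →ₐ[F] K => g c) = 0 := hf (Submodule.subset_span ⟨c, rfl⟩)
    rw [hfe] at this
    simpa using this)
  apply hf0
  ext v
  simp [h0]

theorem galois_step
    (hφ : ∀ (σ : K ≃ₐ[k] K) (c : K) (r : R), φ σ (c • r) = σ c • φ σ r)
    (F : IntermediateField k K) (L : IntermediateField F K)
    [FiniteDimensional F L] :
    Fx φ (L : Set K) ⊆ Submodule.span K (Fx φ (F : Set K)) := by
  classical
  intro r hr
  have hext : ∀ g : L →ₐ[F] K, ∃ σ : K ≃ₐ[k] K, ∀ c : L, σ c = g c := by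
    intro g
    obtain ⟨σ, hσ⟩ := extend L (trdeg_lt_aleph0 F L) g
    exact ⟨σ.restrictScalars k, hσ⟩
  choose E hE using hext
  let T : ((L →ₐ[F] K) → K) →ₗ[K] R :=
    Fintype.linearCombination K (fun g => φ (E g) r)
  have hT : ∀ v, T v = ∑ g, v g • φ (E g) r := fun v => Fintype.linearCombination_apply K _ v
  have h1 : ∀ c : L, T (fun g => g c) ∈ Fx φ (F : Set K) := by
    intro c σ hσ
    obtain ⟨σ', hσ'⟩ := lift_aut F σ hσ
    rw [hT, map_sum]
    refine Fintype.sum_bijective (fun g : L →ₐ[F] K => (σ' : K →ₐ[F] K).comp g) ?_ _ _ ?_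
    · rw [← Finite.injective_iff_bijective]
      intro g g' h
      ext x
      have := DFunLike.congr_fun h x
      exact σ'.injective this
    · intro g
      rw [hφ]
      have : φ σ (φ (E g) r) = φ (σ * E g) r := by rw [map_mul]; rfl
      rw [this]
      congr 1
      · exact (hσ' _).symm
      · refine Fx_congr hr _ _ fun x hx => ?_
        change σ (E g x) = _
        rw [hE g ⟨x, hx⟩, hE _ ⟨x, hx⟩, ← hσ']
        rfl
  have h2 : ∀ v, T v ∈ Submodule.span K (Fx φ (F : Set K)) := by
    intro v
    have hv : v ∈ Submodule.span K (Set.range fun (c : L) (g : L →ₐ[F] K) => g c) := by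
      rw [dedekind_span]; trivial
    have : Submodule.span K (Set.range fun (c : L) (g : L →ₐ[F] K) => g c) ≤
        (Submodule.span K (Fx φ (F : Set K))).comap T := by
      rw [Submodule.span_le]
      rintro _ ⟨c, rfl⟩
      exact Submodule.subset_span (h1 c)
    exact this hv
  have h3 := h2 (Pi.single L.val 1)
  rw [hT, Finset.sum_eq_single L.val] at h3
  · rw [Pi.single_eq_same, one_smul] at h3
    have : φ (E L.val) r = r := hr _ fun x hx => hE L.val ⟨x, hx⟩
    rwa [this] at h3
  · intro g _ hg
    simp [hg]
  · simp


theorem map_eval_aux {ι : Type} (s : K →+* K) (z : ι → K) (p : MvPolynomial ι K) :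
    s (MvPolynomial.eval z p) = MvPolynomial.eval (fun i => s (z i)) (MvPolynomial.map s p) := by
  induction p using MvPolynomial.induction_on with
  | C a => simp
  | add p q hp hq => simp [hp, hq]
  | mul_X p i hp => simp [hp]

theorem repr_fixed
    (hφ : ∀ (σ : K ≃ₐ[k] K) (c : K) (r : R), φ σ (c • r) = σ c • φ σ r)
    {I : Type} (e : Module.Basis I K R) (σ : K ≃ₐ[k] K)
    (he : ∀ i, φ σ (e i) = e i) (r : R) (i : I) :
    e.repr (φ σ r) i = σ (e.repr r i) := by
  have h1 : r = (e.repr r).sum fun i c => c • e i := (e.linearCombination_repr r).symm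
  have h2 : φ σ r = (e.repr r).sum fun i c => σ c • e i := by
    conv_lhs => rw [h1]
    simp only [Finsupp.sum, map_sum, hφ, he]
  have h3 : φ σ r = Finsupp.linearCombination K e
      ((e.repr r).mapRange σ (map_zero σ)) := by
    rw [h2, Finsupp.linearCombination_apply, Finsupp.sum_mapRange_index (by simp)]
  rw [h3, e.repr_linearCombination]
  simp

theorem span_stable
    (hφ : ∀ (σ : K ≃ₐ[k] K) (c : K) (r : R), φ σ (c • r) = σ c • φ σ r)
    (σ : K ≃ₐ[k] K) (r : R)
    (h : φ σ r ∈ Submodule.span K (Fx φ (∅ : Set K))) : r ∈ Submodule.span K (Fx φ (∅ : Set K)) := by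
  have key : ∀ u ∈ Submodule.span K (Fx φ (∅ : Set K)),
      φ σ⁻¹ u ∈ Submodule.span K (Fx φ (∅ : Set K)) := by
    intro u hu
    induction hu using Submodule.span_induction with
    | mem x hx =>
      rw [hx σ⁻¹ (by simp)]
      exact Submodule.subset_span hx
    | zero => rw [map_zero]; exact zero_mem _
    | add x y _ _ hx hy => rw [map_add]; exact add_mem hx hy
    | smul a x _ hx => rw [hφ]; exact Submodule.smul_mem _ _ hx
  have := key _ h
  have h2 : φ σ⁻¹ (φ σ r) = r := by
    have : φ σ⁻¹ (φ σ r) = (φ (σ⁻¹ * σ)) r := by rw [map_mul]; rfl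
    rw [this]; simp
  rwa [h2] at this

/-- common denominators -/
theorem common_denom {F ι I : Type} [Field F] [Algebra F K] (y : ι → K) (c : I → K)
    (hc : ∀ i, c i ∈ IntermediateField.adjoin F (Set.range y)) (s : Finset I) :
    ∃ (h : MvPolynomial ι F) (n : I → MvPolynomial ι F), MvPolynomial.aeval y h ≠ 0 ∧
      ∀ i ∈ s, MvPolynomial.aeval y h * c i = MvPolynomial.aeval y (n i) := by
  classical
  have hND : ∀ i, ∃ N D : MvPolynomial ι F, MvPolynomial.aeval y D ≠ 0 ∧
      MvPolynomial.aeval y D * c i = MvPolynomial.aeval y N := by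
    intro i
    obtain ⟨N, D, h⟩ := (IntermediateField.mem_adjoin_range_iff F y (c i)).1 (hc i)
    by_cases hD : MvPolynomial.aeval y D = 0
    · refine ⟨0, 1, by simp, ?_⟩
      rw [h, hD]; simp
    · exact ⟨N, D, hD, by rw [h]; field_simp⟩
  choose N D hD hN using hND
  refine ⟨∏ i ∈ s, D i, fun i => N i * ∏ j ∈ s.erase i, D j, ?_, ?_⟩
  · rw [map_prod]
    exact Finset.prod_ne_zero_iff.2 fun i _ => hD i
  · intro i hi
    rw [← Finset.mul_prod_erase s D hi, map_mul, map_mul, ← hN]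
    ring

set_option maxHeartbeats 4000000 in
theorem main_step
    (hφ : ∀ (σ : K ≃ₐ[k] K) (c : K) (r : R), φ σ (c • r) = σ c • φ σ r)
    [CharZero k]
    (htr : ∀ L : IntermediateField k K, L.FG → ∃ x : K, Transcendental L x)
    {ι : Type} [Finite ι] (x : ι → K) (hx : AlgebraicIndependent k x)
    (H : Submodule.span K (Fx φ (IntermediateField.adjoin k (Set.range x) : Set K)) = ⊤) :
    Submodule.span K (Fx φ (∅ : Set K)) = ⊤ := by
  classical
  set F := IntermediateField.adjoin k (Set.range x) with hF
  have hFfg : F.FG := IntermediateField.fg_adjoin_of_finite (Set.finite_range x)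
  have hxF : ∀ i, x i ∈ F := fun i => IntermediateField.subset_adjoin _ _ ⟨i, rfl⟩
  -- agreeing on `x` implies agreeing on `F`
  have hagree : ∀ σ τ : K ≃ₐ[k] K, (∀ i, σ (x i) = τ (x i)) → ∀ c ∈ (F : Set K), σ c = τ c := by
    intro σ τ h c hc
    have := fix_adjoin (Set.range x) (τ⁻¹ * σ) (by
      rintro _ ⟨i, rfl⟩
      change τ.symm (σ (x i)) = x i
      rw [h]; simp) c hc
    change τ.symm (σ c) = c at this
    rw [AlgEquiv.symm_apply_eq] at this
    exact this
  have hgen_k : ∀ {z : ι → K} {M : IntermediateField k K}, Gen M z → AlgebraicIndependent k z := by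
    intro z M hz
    have := (gen_iff _ _).1 hz
    exact this.restrictScalars (algebraMap k M).injective
  rw [eq_top_iff, ← H, Submodule.span_le]
  intro r hr
  let e := Module.Basis.ofSpan H.ge
  have he : ∀ i, e i ∈ Fx φ (F : Set K) := fun i =>
    Module.Basis.ofSpan_subset H.ge ⟨i, rfl⟩
  obtain ⟨y, hy⟩ := exists_gen htr F hFfg ι
  have hyF := (gen_iff _ _).1 hy
  obtain ⟨τ, hτ⟩ := extend_indep hx (hgen_k hy)
  -- the coefficients of `φ τ r`
  have hc : ∀ i, e.repr (φ τ r) i ∈ IntermediateField.adjoin F (Set.range y) := by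
    intro i
    change _ ∈ (IntermediateField.adjoin F (Set.range y)).restrictScalars k
    apply fixed_mem'
    intro σ hσ
    have hσF : ∀ c ∈ (F : Set K), σ c = c := by
      intro c hc
      have : c ∈ IntermediateField.adjoin F (Set.range y) :=
        (IntermediateField.adjoin F (Set.range y)).algebraMap_mem ⟨c, hc⟩
      exact hσ c this
    have hσy : ∀ i, σ (y i) = y i := by
      intro i
      have : y i ∈ IntermediateField.adjoin F (Set.range y) :=
        IntermediateField.subset_adjoin F _ (Set.mem_range_self i)
      exact hσ _ this
    rw [← repr_fixed φ hφ e σ (fun i => he i σ hσF)]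
    congr 2
    have : φ σ (φ τ r) = φ (σ * τ) r := by rw [map_mul]; rfl
    rw [this]
    refine Fx_congr hr _ _ (hagree _ _ fun i => ?_)
    change σ (τ (x i)) = _
    rw [hτ, hσy]
  obtain ⟨h, n, hh0, hn⟩ := common_denom y (fun i => e.repr (φ τ r) i) hc (e.repr (φ τ r)).support
  set s := (e.repr (φ τ r)).support with hs
  -- the fundamental relation
  have rel0 : MvPolynomial.aeval y h • φ τ r = ∑ i ∈ s, MvPolynomial.aeval y (n i) • e i := by
    conv_lhs => rw [← e.linearCombination_repr (φ τ r), Finsupp.linearCombination_apply,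
      Finsupp.sum, Finset.smul_sum]
    refine Finset.sum_congr rfl fun i hi => ?_
    rw [smul_smul, hn i hi]
  have rel1 : ∀ τ' : K ≃ₐ[k] K, Gen F (fun i => τ' (x i)) →
      MvPolynomial.aeval (fun i => τ' (x i)) h • φ τ' r =
        ∑ i ∈ s, MvPolynomial.aeval (fun i => τ' (x i)) (n i) • e i := by
    intro τ' hz
    obtain ⟨ρ, hρ⟩ := extend_indep hyF ((gen_iff _ _).1 hz)
    let ρ' : K ≃ₐ[k] K := ρ.restrictScalars k
    have hρF : ∀ c ∈ (F : Set K), ρ' c = c := fun c hc => ρ.commutes ⟨c, hc⟩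
    have hev : ∀ p : MvPolynomial ι F,
        ρ' (MvPolynomial.aeval y p) = MvPolynomial.aeval (fun i => τ' (x i)) p := by
      intro p
      change ρ _ = _
      have h1 := MvPolynomial.comp_aeval_apply (f := y) (ρ : K →ₐ[F] K) p
      refine h1.trans ?_
      have h2 : (fun i => (ρ : K →ₐ[F] K) (y i)) = fun i => τ' (x i) := funext hρ
      rw [h2]
    have h1 := congrArg (φ ρ') rel0
    rw [hφ, map_sum, hev] at h1
    have h2 : φ ρ' (φ τ r) = φ τ' r := by
      have : φ ρ' (φ τ r) = φ (ρ' * τ) r := by rw [map_mul]; rfl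
      rw [this]
      refine Fx_congr hr _ _ (hagree _ _ fun i => ?_)
      change ρ (τ (x i)) = _
      rw [hτ, hρ]
    rw [h2] at h1
    rw [h1]
    refine Finset.sum_congr rfl fun i _ => ?_
    rw [hφ, hev, he i ρ' hρF]
  -- polynomials over `K`
  let hK : MvPolynomial ι K := MvPolynomial.map (algebraMap F K) h
  let nK := fun i => MvPolynomial.map (algebraMap F K) (n i)
  have hae : ∀ (z : ι → K) (p : MvPolynomial ι F),
      MvPolynomial.aeval z p = MvPolynomial.eval z (MvPolynomial.map (algebraMap F K) p) := by
    intro z p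
    rw [MvPolynomial.eval_map, MvPolynomial.aeval_def]
  simp only [hae] at rel1
  change ∀ τ' : K ≃ₐ[k] K, Gen F (fun i => τ' (x i)) →
      MvPolynomial.eval (fun i => τ' (x i)) hK • φ τ' r =
        ∑ i ∈ s, MvPolynomial.eval (fun i => τ' (x i)) (nK i) • e i at rel1
  have hhK : hK ≠ 0 := by
    intro h0
    apply hh0
    rw [hae]
    change MvPolynomial.eval y hK = 0
    rw [h0, map_zero]
  -- the cocycle relation, generically
  have rel2 : ∀ σ : K ≃ₐ[k] K, ∃ M : IntermediateField k K, M.FG ∧ ∀ z : ι → K, Gen M z →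
      MvPolynomial.eval z (MvPolynomial.map (σ : K →+* K) hK) •
        ∑ i ∈ s, MvPolynomial.eval z (nK i) • e i =
      MvPolynomial.eval z hK •
        ∑ i ∈ s, MvPolynomial.eval z (MvPolynomial.map (σ : K →+* K) (nK i)) • φ σ (e i) := by
    intro σ
    refine ⟨F ⊔ F.map (σ : K →ₐ[k] K), ?_, fun z hz => ?_⟩
    · refine IntermediateField.fg_sup hFfg ?_
      rw [hF, IntermediateField.adjoin_map]
      exact IntermediateField.fg_adjoin_of_finite ((Set.finite_range x).image _)
    obtain ⟨τ', hτ'⟩ := extend_indep hx (hgen_k hz)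
    have hz' : (fun i => τ' (x i)) = z := funext hτ'
    have e1 := rel1 τ' (by rw [hz']; exact hz.mono le_sup_left)
    have hz2 : Gen F (fun i => (σ⁻¹ * τ') (x i)) := by
      intro p hp h0
      have h1 := congrArg (σ : K →+* K) h0
      rw [map_eval_aux, map_zero] at h1
      have h2 : (fun i => (σ : K →+* K) ((σ⁻¹ * τ') (x i))) = z := by
        funext i
        change σ (σ.symm (τ' (x i))) = z i
        rw [hτ']; simp
      rw [h2] at h1
      have h3 := hz _ (fun m => by
        rw [MvPolynomial.coeff_map]
        exact (le_sup_right : F.map (σ : K →ₐ[k] K) ≤ _) ⟨_, hp m, rfl⟩) h1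
      apply MvPolynomial.map_injective (σ : K →+* K) σ.injective
      rw [h3, map_zero]
    have e2 := congrArg (φ σ) (rel1 (σ⁻¹ * τ') hz2)
    have hev : ∀ p : MvPolynomial ι K, σ (MvPolynomial.eval (fun i => (σ⁻¹ * τ') (x i)) p) =
        MvPolynomial.eval z (MvPolynomial.map (σ : K →+* K) p) := by
      intro p
      have := map_eval_aux (σ : K →+* K) (fun i => (σ⁻¹ * τ') (x i)) p
      refine this.trans ?_
      congr 2
      funext i
      change σ (σ.symm (τ' (x i))) = z i
      rw [hτ']; simp
    rw [hφ, map_sum, hev] at e2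
    simp only [hφ, hev] at e2
    have h4 : φ σ (φ (σ⁻¹ * τ') r) = φ τ' r := by
      have : φ σ (φ (σ⁻¹ * τ') r) = φ (σ * (σ⁻¹ * τ')) r := by
        rw [map_mul φ σ]; rfl
      rw [this, mul_inv_cancel_left]
    rw [h4] at e2
    rw [hz'] at e1
    rw [← e1, ← e2, smul_comm]
  -- and everywhere
  have rel3 : ∀ (σ : K ≃ₐ[k] K) (b : ι → K),
      MvPolynomial.eval b (MvPolynomial.map (σ : K →+* K) hK) •
        ∑ i ∈ s, MvPolynomial.eval b (nK i) • e i =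
      MvPolynomial.eval b hK •
        ∑ i ∈ s, MvPolynomial.eval b (MvPolynomial.map (σ : K →+* K) (nK i)) • φ σ (e i) := by
    intro σ b
    obtain ⟨M, hM, hMz⟩ := rel2 σ
    apply e.repr.injective
    ext j
    let q : MvPolynomial ι K := MvPolynomial.map (σ : K →+* K) hK *
        (∑ i ∈ s, nK i * MvPolynomial.C (e.repr (e i) j)) -
      hK * ∑ i ∈ s, MvPolynomial.map (σ : K →+* K) (nK i) * MvPolynomial.C (e.repr (φ σ (e i)) j)
    have hq : ∀ z, MvPolynomial.eval z q =
      e.repr (MvPolynomial.eval z (MvPolynomial.map (σ : K →+* K) hK) •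
        ∑ i ∈ s, MvPolynomial.eval z (nK i) • e i) j -
      e.repr (MvPolynomial.eval z hK •
        ∑ i ∈ s, MvPolynomial.eval z (MvPolynomial.map (σ : K →+* K) (nK i)) • φ σ (e i)) j := by
      intro z
      simp only [q, map_sub, map_mul, map_sum, MvPolynomial.eval_C, map_smul, Finsupp.smul_apply,
        Finsupp.finsetSum_apply, smul_eq_mul]
    obtain ⟨z, hz⟩ := exists_gen htr (M ⊔ IntermediateField.adjoin k (q.coeffs : Set K))
      (IntermediateField.fg_sup hM (IntermediateField.fg_adjoin_of_finite q.coeffs.finite_toSet)) ι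
    have hq0 : q = 0 := by
      apply hz q
      · intro m
        by_cases hm : q.coeff m = 0
        · rw [hm]; exact zero_mem _
        · refine (le_sup_right : IntermediateField.adjoin k (q.coeffs : Set K) ≤ _) ?_
          exact IntermediateField.subset_adjoin _ _ (MvPolynomial.coeff_mem_coeffs m hm)
      · rw [hq, hMz z (hz.mono le_sup_left), sub_self]
    have := hq b
    rw [hq0, map_zero] at this
    exact (sub_eq_zero.1 this.symm)
  -- rational specialisations are invariant
  have inv : ∀ b : ι → k, MvPolynomial.eval (fun i => algebraMap k K (b i)) hK ≠ 0 →
      ∑ i ∈ s, MvPolynomial.eval (fun i => algebraMap k K (b i)) (nK i) • e i ∈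
        Submodule.span K (Fx φ (∅ : Set K)) := by
    intro b hb
    set b' := fun i => algebraMap k K (b i) with hb'
    set W := ∑ i ∈ s, MvPolynomial.eval b' (nK i) • e i with hW
    have hev : ∀ (σ : K ≃ₐ[k] K) (p : MvPolynomial ι K),
        MvPolynomial.eval b' (MvPolynomial.map (σ : K →+* K) p) = σ (MvPolynomial.eval b' p) := by
      intro σ p
      have := map_eval_aux (σ : K →+* K) b' p
      refine Eq.trans ?_ this.symm
      congr 2
      funext i
      exact (σ.commutes _).symm
    have hfix : (MvPolynomial.eval b' hK)⁻¹ • W ∈ Fx φ (∅ : Set K) := by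
      intro σ _
      have h1 := rel3 σ b'
      simp only [hev] at h1
      have h2 : φ σ W = ∑ i ∈ s, σ (MvPolynomial.eval b' (nK i)) • φ σ (e i) := by
        rw [hW, map_sum]; simp only [hφ]
      rw [← h2, ← hW] at h1
      have hσb : σ (MvPolynomial.eval b' hK) ≠ 0 := by simpa using hb
      rw [hφ, map_inv₀, inv_smul_eq_iff₀ hσb, smul_comm, h1, smul_smul, inv_mul_cancel₀ hb,
        one_smul]
    have : W = MvPolynomial.eval b' hK • (MvPolynomial.eval b' hK)⁻¹ • W := by
      rw [smul_smul, mul_inv_cancel₀ hb, one_smul]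
    rw [this]
    exact Submodule.smul_mem _ _ (Submodule.subset_span hfix)
  have all : ∀ z : ι → K, ∑ i ∈ s, MvPolynomial.eval z (nK i) • e i ∈
        Submodule.span K (Fx φ (∅ : Set K)) := by
    intro z
    by_contra hz
    obtain ⟨f, hf0, hf⟩ := Submodule.exists_le_ker_of_notMem hz
    apply hf0
    have hw : hK * ∑ i ∈ s, nK i * MvPolynomial.C (f (e i)) = 0 := by
      apply MvPolynomial.funext_set (fun _ => Set.range (algebraMap k K))
        (fun _ => Set.infinite_range_of_injective (algebraMap k K).injective)
      intro b' hb'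
      choose b hb using fun i => hb' i trivial
      obtain rfl : (fun i => algebraMap k K (b i)) = b' := funext hb
      rw [map_mul, map_zero]
      by_cases h0 : MvPolynomial.eval (fun i => algebraMap k K (b i)) hK = 0
      · rw [h0, zero_mul]
      · have := hf (inv b h0)
        rw [LinearMap.mem_ker, map_sum] at this
        simp only [map_smul, smul_eq_mul] at this
        rw [map_sum]
        simp only [map_mul, MvPolynomial.eval_C, this, mul_zero]
    have hw2 := congrArg (MvPolynomial.eval z) ((mul_eq_zero.1 hw).resolve_left hhK)
    rw [map_sum, map_zero] at hw2
    simp only [map_mul, MvPolynomial.eval_C] at hw2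
    rw [map_sum]
    simpa only [map_smul, smul_eq_mul] using hw2
  apply span_stable φ hφ τ
  have := all y
  simp only [hae] at rel0
  change MvPolynomial.eval y hK • φ τ r = ∑ i ∈ s, MvPolynomial.eval y (nK i) • e i at rel0
  rw [← rel0] at this
  rw [hae] at hh0
  exact (Submodule.smul_mem_iff _ hh0).1 this

end action

theorem fg_field_aux {k K : Type} [Field k] [Field K] [Algebra k K] (T : Set K) (hT : T.Finite) :
    ∃ u : Set K, u.Finite ∧ AlgebraicIndependent k ((↑) : u → K) ∧
      FiniteDimensional (IntermediateField.adjoin k (Set.range ((↑) : u → K)))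
        (IntermediateField.adjoin (IntermediateField.adjoin k (Set.range ((↑) : u → K))) T) := by
  obtain ⟨u, hu⟩ := (AlgebraicIndependent.matroid k K).exists_isBasis T
  obtain ⟨h1, h2, h3⟩ := AlgebraicIndependent.matroid_isBasis_iff.1 hu
  refine ⟨u, hT.subset h2, h1, ?_⟩
  have := hT.to_subtype
  apply IntermediateField.finiteDimensional_adjoin
  intro a ha
  rw [Subtype.range_coe]
  exact (algebraic_field_of_ring (h3 a ha)).isIntegral

theorem span_top {k K : Type} [Field k] [CharZero k] [Field K] [IsAlgClosed K] [Algebra k K]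
    (htr : ∀ L : IntermediateField k K, L.FG → ∃ x : K, Transcendental L x)
    {R : Type} [CommRing R] [Algebra K R]
    (s : Set R) (hsfin : s.Finite) (hs : Algebra.adjoin K s = ⊤)
    (φ : (K ≃ₐ[k] K) →* (R ≃+* R))
    (hφ : ∀ (σ : K ≃ₐ[k] K) (c : K) (r : R), φ σ (c • r) = σ c • φ σ r)
    (hcont : ∀ r : R, ∃ L : IntermediateField k K, L.FG ∧
      ∀ σ : K ≃ₐ[k] K, (∀ x ∈ L, σ x = x) → φ σ r = r) :
    Submodule.span K (Fx φ (∅ : Set K)) = ⊤ := by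
  choose L hL hLfix using hcont
  choose T hT using hL
  let U : Set K := ⋃ r ∈ s, (T r : Set K)
  have hU : U.Finite := hsfin.biUnion fun r _ => (T r).finite_toSet
  obtain ⟨u, hufin, hu, hfd⟩ := fg_field_aux (k := k) U hU
  have := hufin.to_subtype
  apply main_step φ hφ htr ((↑) : u → K) hu
  set F := IntermediateField.adjoin k (Set.range ((↑) : u → K)) with hF
  let E := IntermediateField.adjoin F U
  have hUE : U ⊆ E := IntermediateField.subset_adjoin F U
  have h1 : (Submonoid.closure s : Set R) ⊆ Fx φ (E : Set K) := by
    intro r hr σ hσ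
    induction hr using Submonoid.closure_induction with
    | mem r hr =>
      apply hLfix r σ
      rw [← hT r]
      apply fix_adjoin
      intro a ha
      exact hσ a (hUE (Set.mem_biUnion hr ha))
    | one => exact map_one _
    | mul a b _ _ ha hb => rw [map_mul, ha, hb]
  rw [eq_top_iff, ← Algebra.top_toSubmodule, ← hs, Algebra.adjoin_eq_span, Submodule.span_le]
  exact h1.trans (galois_step φ hφ F E)

theorem fixed_fg {k K : Type} [Field k] [CharZero k] [Field K] [IsAlgClosed K] [Algebra k K]
    {R : Type} [CommRing R] [Algebra K R] [Algebra k R] [IsScalarTower k K R]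
    (s : Set R) (hs : Algebra.adjoin K s = ⊤)
    (φ : (K ≃ₐ[k] K) →* (R ≃+* R))
    (hφ : ∀ (σ : K ≃ₐ[k] K) (c : K) (r : R), φ σ (c • r) = σ c • φ σ r)
    (hsfix : ∀ r ∈ s, ∀ σ, φ σ r = r) (r : R) (hr : ∀ σ, φ σ r = r) :
    r ∈ Algebra.adjoin k s := by
  have H : ⊤ ≤ Submodule.span K (Submonoid.closure s : Set R) := by
    rw [← Algebra.adjoin_eq_span, hs, Algebra.top_toSubmodule]
  let e := Module.Basis.ofSpan H
  have he : ∀ i, e i ∈ Submonoid.closure s := fun i => Module.Basis.ofSpan_subset H ⟨i, rfl⟩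
  have hefix : ∀ i σ, φ σ (e i) = e i := by
    intro i σ
    have := he i
    generalize e i = a at this
    induction this using Submonoid.closure_induction with
    | mem r hr => exact hsfix r hr σ
    | one => exact map_one _
    | mul a b _ _ ha hb => rw [map_mul, ha, hb]
  rw [← e.linearCombination_repr r, Finsupp.linearCombination_apply]
  refine Subalgebra.sum_mem _ fun i _ => ?_
  obtain ⟨a, ha⟩ := fixed_mem (F := k) (e.repr r i) fun σ => by
    rw [← repr_fixed φ hφ e σ (fun i => hefix i σ), hr]
  rw [← ha]
  beta_reduce
  rw [algebraMap_smul]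
  refine Subalgebra.smul_mem _ ?_ a
  have : Submonoid.closure s ≤ (Algebra.adjoin k s).toSubsemiring.toSubmonoid :=
    Submonoid.closure_le.2 Algebra.subset_adjoin
  exact this (he i)

end WeilDescent

open WeilDescent

/-- Weil descent for affine schemes (algebraic form). -/
theorem weil_descent_affine_algebraic
    (k K : Type) [Field k] [CharZero k] [Field K] [IsAlgClosed K] [Algebra k K]
    -- `K` has infinite transcendence degree over `k`
    (htr : ∀ L : IntermediateField k K, L.FG → ∃ x : K, Transcendental L x)
    (R : Type) [CommRing R] [Algebra K R] [Algebra k R] [IsScalarTower k K R]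
    -- `R` is a finitely generated `K`-algebra
    (hfg : Algebra.FiniteType K R)
    -- a semilinear action of `Aut(K/k)` on `R`
    (φ : (K ≃ₐ[k] K) →* (R ≃+* R))
    (hsemi : ∀ (σ : K ≃ₐ[k] K) (c : K) (r : R),
      φ σ (algebraMap K R c * r) = algebraMap K R (σ c) * φ σ r)
    -- continuity of the action
    (hcont : ∀ r : R, ∃ L : IntermediateField k K, L.FG ∧
      ∀ σ : K ≃ₐ[k] K, (∀ x ∈ L, σ x = x) → φ σ r = r) :
    -- the fixed subring `R₀` spans `R` over `K` and is a finitely generated `k`-algebra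
    Submodule.span K {r : R | ∀ σ : K ≃ₐ[k] K, φ σ r = r} = ⊤ ∧
    ∃ s : Finset R, (s : Set R) ⊆ {r : R | ∀ σ : K ≃ₐ[k] K, φ σ r = r} ∧
      ∀ r ∈ {r : R | ∀ σ : K ≃ₐ[k] K, φ σ r = r}, r ∈ Algebra.adjoin k (s : Set R) := by
  classical
  have hφ : ∀ (σ : K ≃ₐ[k] K) (c : K) (r : R), φ σ (c • r) = σ c • φ σ r := by
    intro σ c r
    rw [Algebra.smul_def, Algebra.smul_def, hsemi]
  have hset : {r : R | ∀ σ : K ≃ₐ[k] K, φ σ r = r} = Fx φ (∅ : Set K) := by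
    ext r
    simp [Fx]
  obtain ⟨s₀, hs₀⟩ := hfg.out
  have htop := span_top htr (s₀ : Set R) s₀.finite_toSet hs₀ φ hφ hcont
  rw [hset]
  refine ⟨htop, ?_⟩
  have hfin : ∀ r : R, ∃ T : Finset R, (T : Set R) ⊆ Fx φ (∅ : Set K) ∧
      r ∈ Submodule.span K (T : Set R) := fun r =>
    Submodule.mem_span_finite_of_mem_span (htop ▸ Submodule.mem_top : r ∈ Submodule.span K _)
  choose T hT hrT using hfin
  refine ⟨s₀.biUnion T, ?_, ?_⟩
  · intro r hr
    obtain ⟨a, -, ha⟩ := Finset.mem_biUnion.1 (Finset.mem_coe.1 hr)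
    exact hT a ha
  · intro r hr
    refine fixed_fg _ ?_ φ hφ ?_ r (fun σ => hr σ (by simp))
    · rw [eq_top_iff, ← hs₀]
      refine Algebra.adjoin_le fun a ha => ?_
      have h1 : Submodule.span K (T a : Set R) ≤
          Subalgebra.toSubmodule (Algebra.adjoin K ((s₀.biUnion T : Finset R) : Set R)) := by
        rw [Submodule.span_le]
        intro b hb
        exact Algebra.subset_adjoin (Finset.mem_coe.2 (Finset.mem_biUnion.2 ⟨a, ha, hb⟩))
      exact h1 (hrT a)
    · intro a ha σ
      obtain ⟨b, -, hb⟩ := Finset.mem_biUnion.1 (Finset.mem_coe.1 ha)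
      exact hT b hb σ (by simp)
end

section
/- Weil descent for quasi-affine schemes: Let k be a field of characteristic zero and K an algebraically closed field extension of k of infinite transcendence degree over k. Let Y be an integral scheme that is quasi-affine over K, equipped with a continuous descent datum with respect to K/k. Then the descent datum is effective, and the scheme X over k realizing it can be taken quasi-affine of finite type over k. -/
open AlgebraicGeometry CategoryTheory CategoryTheory.Limits

noncomputable section

namespace Paper

attribute [local instance] MvPolynomial.gradedAlgebra

/-- Projective `n`-space over a ring `K`, as `Proj` of the polynomial ring in `n + 1`
variables with its grading by total degree. -/
def ProjSpace (K : Type) [CommRing K] (n : ℕ) : Scheme :=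
  Proj (MvPolynomial.homogeneousSubmodule (Fin (n + 1)) K)

/-- The structure morphism `ℙⁿ_K ⟶ Spec K`. -/
def ProjSpace.structMap (K : Type) [CommRing K] (n : ℕ) :
    ProjSpace K n ⟶ Spec (CommRingCat.of K) :=
  Proj.toSpecZero _ ≫ Spec.map (CommRingCat.ofHom
    (algebraMap K (MvPolynomial.homogeneousSubmodule (Fin (n + 1)) K 0)))

/-- A scheme `Y` with structure morphism `p : Y ⟶ Spec K` is quasi-projective over `K` if
for some `n` there is an immersion (locally closed immersion) `Y ⟶ ℙⁿ_K` over `K`. -/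
def QuasiProjectiveOver (K : Type) [CommRing K] {Y : Scheme}
    (p : Y ⟶ Spec (CommRingCat.of K)) : Prop :=
  ∃ (n : ℕ) (f : Y ⟶ ProjSpace K n), IsImmersion f ∧ f ≫ ProjSpace.structMap K n = p

/-- A scheme `Y` with structure morphism `p : Y ⟶ Spec K` is quasi-affine over `K` if it is
of finite type over `K` and admits an open immersion over `K` into an affine `K`-scheme. -/
def QuasiAffineOver (K : Type) [CommRing K] {Y : Scheme}
    (p : Y ⟶ Spec (CommRingCat.of K)) : Prop :=
  LocallyOfFiniteType p ∧ QuasiCompact p ∧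
    ∃ (Z : Scheme) (q : Z ⟶ Spec (CommRingCat.of K)) (j : Y ⟶ Z),
      IsAffine Z ∧ IsOpenImmersion j ∧ j ≫ q = p

variable (k K : Type) [Field k] [Field K] [Algebra k K]

/-- The automorphism `Spec (σ⁻¹)` of `Spec K` attached to `σ ∈ Aut(K/k)`. -/
def specAut (σ : K ≃ₐ[k] K) : Spec (CommRingCat.of K) ⟶ Spec (CommRingCat.of K) :=
  Spec.map (CommRingCat.ofHom ((σ⁻¹ : K ≃ₐ[k] K) : K →+* K))

/-- A descent datum on the `K`-scheme `(Y, p)` with respect to `K/k`: an action of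
`Aut(K/k)` on `Y` by scheme isomorphisms lifting the natural action on `Spec K`. -/
structure DescentDatum (Y : Scheme) (p : Y ⟶ Spec (CommRingCat.of K)) where
  act : (K ≃ₐ[k] K) →* Aut Y
  compat : ∀ σ : K ≃ₐ[k] K, (act σ).hom ≫ p = p ≫ specAut k K σ

lemma specAut_comp (σ : K ≃ₐ[k] K) :
    specAut k K σ ≫ Spec.map (CommRingCat.ofHom (algebraMap k K)) =
      Spec.map (CommRingCat.ofHom (algebraMap k K)) := by
  rw [specAut, ← Spec.map_comp]
  congr 1
  ext x
  exact (σ⁻¹ : K ≃ₐ[k] K).commutes x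

/-- The base change to `K` of a scheme `X` over `k`. -/
def baseChange {X : Scheme} (q : X ⟶ Spec (CommRingCat.of k)) : Scheme :=
  pullback q (Spec.map (CommRingCat.ofHom (algebraMap k K)))

/-- The automorphism `id_X × Spec (σ⁻¹)` of the base change `X ×_{Spec k} Spec K`. -/
def baseChangeAut {X : Scheme} (q : X ⟶ Spec (CommRingCat.of k)) (σ : K ≃ₐ[k] K) :
    baseChange k K q ⟶ baseChange k K q :=
  pullback.map _ _ _ _ (𝟙 X) (specAut k K σ) (𝟙 (Spec (CommRingCat.of k)))
    (by simp) (by rw [Category.comp_id, specAut_comp])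

/-- A scheme isomorphism fixes the generic point of an irreducible scheme. -/
lemma aut_base_genericPoint {Y : Scheme} [IrreducibleSpace Y] (e : Y ≅ Y) :
    e.hom.base (genericPoint Y) = genericPoint Y := by
  let h : Y ≃ₜ Y := TopCat.homeoOfIso (Scheme.forgetToTop.mapIso e)
  have hg : IsGenericPoint (h (genericPoint Y)) (⊤ : Set Y) := by
    rw [IsGenericPoint, ← Set.image_singleton, ← h.image_closure,
      (genericPoint_spec Y).def, Set.top_eq_univ, Set.image_univ, h.surjective.range_eq]
  exact hg.eq (genericPoint_spec Y)

variable {k K}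

/-- The action of `σ ∈ Aut(K/k)` on the function field of `Y`, given by pullback of rational
functions along the action of `σ⁻¹` on `Y`. -/
def DescentDatum.ffAction {Y : Scheme} [IrreducibleSpace Y] {p : Y ⟶ Spec (CommRingCat.of K)}
    (D : DescentDatum k K Y p) (σ : K ≃ₐ[k] K) :
    Y.functionField ⟶ Y.functionField :=
  eqToHom (congrArg Y.presheaf.stalk (aut_base_genericPoint ((D.act σ⁻¹ : Aut Y) : Y ≅ Y)).symm) ≫
    (D.act σ⁻¹ : Aut Y).hom.stalkMap (genericPoint Y)

/-- Continuity of a descent datum on an irreducible scheme: every rational function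
(i.e. element of the function field) is defined over a subfield of `K` that is finitely
generated over `k`. -/
def DescentDatum.IsContinuous {Y : Scheme} [IrreducibleSpace Y]
    {p : Y ⟶ Spec (CommRingCat.of K)} (D : DescentDatum k K Y p) : Prop :=
  ∀ f : Y.functionField, ∃ L : IntermediateField k K, L.FG ∧
    ∀ σ : K ≃ₐ[k] K, (∀ x ∈ L, σ x = x) → D.ffAction σ f = f

/-! ### Part A: automorphisms of algebraically closed fields -/

/-- Algebraically closed extensions of equal transcendence degree are isomorphic. -/
lemma exists_algEquiv_of_trdeg_eq {R K₁ K₂ : Type} [Field R] [Field K₁] [Field K₂]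
    [Algebra R K₁] [Algebra R K₂] [IsAlgClosed K₁] [IsAlgClosed K₂]
    (h : Algebra.trdeg R K₁ = Algebra.trdeg R K₂) : 
    ∃ e : K₁ ≃+* K₂, ∀ r : R, e (algebraMap R K₁ r) = algebraMap R K₂ r := by
  obtain ⟨s, hs⟩ := exists_isTranscendenceBasis R K₁
  obtain ⟨t, ht⟩ := exists_isTranscendenceBasis R K₂
  have hc : Cardinal.mk s = Cardinal.mk t := by
    rw [hs.cardinalMk_eq_trdeg, ht.cardinalMk_eq_trdeg, h]
  obtain ⟨e⟩ := Cardinal.eq.1 hc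
  let S := Algebra.adjoin R (Set.range ((↑) : s → K₁))
  let T := Algebra.adjoin R (Set.range ((↑) : t → K₂))
  let _ : IsAlgClosure S K₁ := IsAlgClosed.isAlgClosure_of_transcendence_basis _ hs
  let _ : IsAlgClosure T K₂ := IsAlgClosed.isAlgClosure_of_transcendence_basis _ ht
  let f : S ≃ₐ[R] T :=
    (hs.1.aevalEquiv.symm.trans (MvPolynomial.renameEquiv R e)).trans ht.1.aevalEquiv
  let g : K₁ ≃+* K₂ := IsAlgClosure.equivOfEquiv K₁ K₂ f.toRingEquiv
  refine ⟨g, fun r => ?_⟩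
  have h1 : algebraMap R K₁ r = algebraMap S K₁ (algebraMap R S r) := rfl
  rw [h1, IsAlgClosure.equivOfEquiv_algebraMap]
  change algebraMap T K₂ (f (algebraMap R S r)) = _
  rw [f.commutes]
  rfl

section
variable {k K : Type} [Field k] [Field K] [IsAlgClosed K] [Algebra k K]

lemma aleph0_le_trdeg (htr : ∀ L : IntermediateField k K, L.FG → ∃ x : K, Transcendental L x) :
    Cardinal.aleph0 ≤ Algebra.trdeg k K := by
  by_contra! hlt
  obtain ⟨s, hs⟩ := exists_isTranscendenceBasis k K
  have fin : s.Finite := Cardinal.lt_aleph0_iff_set_finite.1 (hs.cardinalMk_eq_trdeg.trans_lt hlt)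
  obtain ⟨x, hx⟩ := htr (IntermediateField.adjoin k s) (IntermediateField.fg_adjoin_of_finite fin)
  have alg := hs.isAlgebraic_field
  rw [Subtype.range_coe] at alg
  exact hx (alg.isAlgebraic x)

lemma trdeg_lt_of_fg {M : IntermediateField k K} (hM : M.FG) : Algebra.trdeg k M < .aleph0 := by
  rw [← IntermediateField.essFiniteType_iff] at hM
  exact trdeg_lt_aleph0 k M

/-- Extension of embeddings of finitely generated subfields to automorphisms. -/
lemma exists_extension
    (htr : ∀ L : IntermediateField k K, L.FG → ∃ x : K, Transcendental L x)
    {M : IntermediateField k K} (hM : M.FG) (φ : M →ₐ[k] K) :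
    ∃ σ : K ≃ₐ[k] K, ∀ x : M, σ x = φ x := by
  have hinf := aleph0_le_trdeg htr
  have hfin := trdeg_lt_of_fg hM
  have key : ∀ (i : Algebra M K) (_ : @IsScalarTower k M K _ i.toSMul _),
      @Algebra.trdeg M K _ _ i = Algebra.trdeg k K := by
    intro i _
    have h := _root_.trdeg_add_eq k M (A := K)
    have h2 : Cardinal.aleph0 ≤ Algebra.trdeg M K := by
      by_contra! hlt
      exact absurd (h ▸ hinf) (not_le.2 (Cardinal.add_lt_aleph0 hfin hlt))
    rw [← h, Cardinal.add_eq_right h2 (hfin.le.trans h2)]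
  have h1 := key inferInstance inferInstance
  have tw : @IsScalarTower k M K _ φ.toRingHom.toAlgebra.toSMul _ :=
    @IsScalarTower.of_algebraMap_eq k M K _ _ _ _ φ.toRingHom.toAlgebra _
      (fun x => (φ.commutes x).symm)
  have h2 := key φ.toRingHom.toAlgebra tw
  obtain ⟨e, he⟩ := @exists_algEquiv_of_trdeg_eq M K K _ _ _ _ φ.toRingHom.toAlgebra _ _
    (h1.trans h2.symm)
  replace he : ∀ x : M, e x = φ x := he
  refine ⟨AlgEquiv.ofRingEquiv (f := e) fun r => ?_, fun x => he x⟩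
  exact (he (algebraMap k M r)).trans (φ.commutes r)

/-- Algebraically independent finite tuples are conjugate. -/
lemma exists_conj
    (htr : ∀ L : IntermediateField k K, L.FG → ∃ x : K, Transcendental L x)
    {ι : Type} [Finite ι] {x y : ι → K} (hx : AlgebraicIndependent k x)
    (hy : AlgebraicIndependent k y) : ∃ σ : K ≃ₐ[k] K, ∀ i, σ (x i) = y i := by
  have hM : (IntermediateField.adjoin k (Set.range x)).FG :=
    IntermediateField.fg_adjoin_of_finite (Set.finite_range x)
  let φ : IntermediateField.adjoin k (Set.range x) →ₐ[k] K :=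
    (IntermediateField.val _).comp (hx.aevalEquivField.symm.trans hy.aevalEquivField).toAlgHom
  obtain ⟨σ, hσ⟩ := exists_extension htr hM φ
  refine ⟨σ, fun i => ?_⟩
  have hmem : x i ∈ IntermediateField.adjoin k (Set.range x) :=
    IntermediateField.subset_adjoin _ _ ⟨i, rfl⟩
  have h1 : hx.aevalEquivField 
      (algebraMap (MvPolynomial ι k) (FractionRing (MvPolynomial ι k)) (MvPolynomial.X i)) = ⟨x i, hmem⟩ := by
    apply Subtype.ext
    rw [hx.aevalEquivField_algebraMap_apply_coe, MvPolynomial.aeval_X]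
  have h2 := hσ ⟨x i, hmem⟩
  change σ (x i) = ((hy.aevalEquivField (hx.aevalEquivField.symm ⟨x i, hmem⟩) : _) : K) at h2
  rw [← h1, AlgEquiv.symm_apply_apply, hy.aevalEquivField_algebraMap_apply_coe,
    MvPolynomial.aeval_X] at h2
  exact h2

/-- Existence of generic tuples. -/
lemma exists_generic
    (htr : ∀ L : IntermediateField k K, L.FG → ∃ x : K, Transcendental L x)
    {M : IntermediateField k K} (hM : M.FG) (ι : Type) [Finite ι] :
    ∃ u : ι → K, AlgebraicIndependent M u := by
  have hinf := aleph0_le_trdeg htr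
  have hfin := trdeg_lt_of_fg hM
  have h := _root_.trdeg_add_eq k M (A := K)
  have h2 : Cardinal.aleph0 ≤ Algebra.trdeg M K := by
    by_contra! hlt
    exact absurd (h ▸ hinf) (not_le.2 (Cardinal.add_lt_aleph0 hfin hlt))
  obtain ⟨s, hs⟩ := exists_isTranscendenceBasis M K
  rw [← hs.cardinalMk_eq_trdeg] at h2
  have h3 : Cardinal.mk ι ≤ Cardinal.mk s := (Cardinal.lt_aleph0_of_finite ι).le.trans h2
  obtain ⟨e⟩ := Cardinal.le_def _ _ |>.1 h3
  exact ⟨_, hs.1.comp e e.injective⟩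

lemma htr_of_fg
    (htr : ∀ L : IntermediateField k K, L.FG → ∃ x : K, Transcendental L x)
    {M : IntermediateField k K} (hM : M.FG) (L : IntermediateField M K) (hL : L.FG) :
    ∃ x : K, Transcendental L x := by
  have hfg : (L.restrictScalars k).FG := by
    obtain ⟨s, hs⟩ := hM
    obtain ⟨t, ht⟩ := hL
    classical
    refine ⟨s ∪ t, ?_⟩
    subst hs
    rw [← ht, IntermediateField.adjoin_adjoin_left, Finset.coe_union]
  exact htr _ hfg

/-- The fixed field of `Aut(K/k)` is `k`. -/
lemma mem_of_fixed_bot [CharZero k]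
    (htr : ∀ L : IntermediateField k K, L.FG → ∃ x : K, Transcendental L x) {x : K}
    (hx : ∀ σ : K ≃ₐ[k] K, σ x = x) : x ∈ (algebraMap k K).range := by
  by_cases halg : IsAlgebraic k x
  · have hintegral := halg.isIntegral
    have hroot : ∀ y ∈ (minpoly k x).rootSet K, y = x := by
      intro y hy
      have hy' : y ∈ (minpoly k x).aroots K := by
        simpa [Polynomial.rootSet] using hy
      obtain ⟨σ, hσ⟩ := exists_extension htr (M := IntermediateField.adjoin k {x})
        (IntermediateField.fg_adjoin_of_finite (Set.finite_singleton x))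
        ((IntermediateField.algHomAdjoinIntegralEquiv k hintegral).symm ⟨y, hy'⟩)
      have h1 := hσ (IntermediateField.AdjoinSimple.gen k x)
      rw [IntermediateField.algHomAdjoinIntegralEquiv_symm_apply_gen] at h1
      exact h1.symm.trans (hx σ)
    have hcard := Polynomial.card_rootSet_eq_natDegree (K := K)
      (minpoly.irreducible hintegral).separable (IsAlgClosed.splits _)
    have hle : Fintype.card ((minpoly k x).rootSet K) ≤ 1 := by
      rw [Fintype.card_le_one_iff_subsingleton]
      exact ⟨fun a b => Subtype.ext ((hroot a a.2).trans (hroot b b.2).symm)⟩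
    have hpos := minpoly.natDegree_pos hintegral
    exact (minpoly.natDegree_eq_one_iff (A := k)).1 (by omega)
  · exfalso
    have h1 : AlgebraicIndependent k (fun _ : Unit => x) :=
      (algebraicIndependent_unique_type_iff).2 halg
    have h2 : AlgebraicIndependent k (fun _ : Unit => x + 1) := by
      refine (algebraicIndependent_unique_type_iff).2 fun h => halg ?_
      have := h.sub (isAlgebraic_one (R := k) (A := K))
      simpa using this
    obtain ⟨σ, hσ⟩ := exists_conj htr h1 h2
    have := (hσ ()).symm.trans (hx σ)
    simp at this

/-- The fixed field of `Aut(K/M)` is `M`. -/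
lemma mem_of_fixed [CharZero k]
    (htr : ∀ L : IntermediateField k K, L.FG → ∃ x : K, Transcendental L x)
    {M : IntermediateField k K} (hM : M.FG) {x : K}
    (hx : ∀ σ : K ≃ₐ[k] K, (∀ y ∈ M, σ y = y) → σ x = x) : x ∈ M := by
  have : CharZero M := charZero_of_injective_algebraMap (algebraMap k M).injective
  obtain ⟨y, hy⟩ := mem_of_fixed_bot (k := M) (htr_of_fg htr hM) (x := x) fun σ =>
    hx (σ.restrictScalars k) fun y hy => σ.commutes ⟨y, hy⟩
  exact hy ▸ y.2

end
/-! ### Part B: semilinear representations -/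

section
variable {k K : Type} [Field k] [Field K] [Algebra k K]
variable {V : Type} [AddCommGroup V] [Module K V] [DistribMulAction (K ≃ₐ[k] K) V]

/-- `v` is fixed by the automorphisms of `K` fixing `M`. -/
def FixedBy (M : IntermediateField k K) (v : V) : Prop :=
  ∀ σ : K ≃ₐ[k] K, (∀ y ∈ M, σ y = y) → σ • v = v

lemma rel_of_rel (hsl : ∀ (σ : K ≃ₐ[k] K) (a : K) (v : V), σ • (a • v) = σ a • σ • v)
    (M : IntermediateField k K)
    (hfix : ∀ x : K, (∀ σ : K ≃ₐ[k] K, (∀ y ∈ M, σ y = y) → σ x = x) → x ∈ M)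
    (W : Submodule K V) (hW : ∀ σ : K ≃ₐ[k] K, (∀ y ∈ M, σ y = y) → ∀ w ∈ W, σ • w ∈ W)
    {ι : Type*} [DecidableEq ι] (c : ι → V) (hc : ∀ i, FixedBy M (c i)) :
    ∀ (n : ℕ) (s : Finset ι) (_ : s.card = n) (a : ι → K), ∑ i ∈ s, a i • c i ∈ W →
      (∃ i ∈ s, a i ≠ 0) →
      ∃ m : ι → K, (∀ i, m i ∈ M) ∧ ∑ i ∈ s, m i • c i ∈ W ∧ ∃ i ∈ s, m i ≠ 0 := by
  intro n
  induction n with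
  | zero =>
    intro s hs a _ ⟨i, hi, _⟩
    rw [Finset.card_eq_zero] at hs
    simp [hs] at hi
  | succ n ih =>
    intro s hs a ha ⟨i, hi, hai⟩
    let a' : ι → K := fun j => (a i)⁻¹ * a j
    have ha'i : a' i = 1 := inv_mul_cancel₀ hai
    have ha' : ∑ j ∈ s, a' j • c j ∈ W := by
      have := W.smul_mem (a i)⁻¹ ha
      rw [Finset.smul_sum] at this
      simpa only [smul_smul] using this
    by_cases hM : ∀ j ∈ s, a' j ∈ M
    · refine ⟨fun j => if j ∈ s then a' j else 0, ?_, ?_, i, hi, ?_⟩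
      · intro j
        by_cases hj : j ∈ s
        · simpa [hj] using hM j hj
        · simpa [hj] using M.zero_mem
      · rw [Finset.sum_congr rfl (g := fun j => a' j • c j)]
        · exact ha'
        · intro j hj
          simp [hj]
      · simp [hi, ha'i]
    · push Not at hM
      obtain ⟨j, hj, hjM⟩ := hM
      have : ¬ ∀ σ : K ≃ₐ[k] K, (∀ y ∈ M, σ y = y) → σ (a' j) = a' j := fun h => hjM (hfix _ h)
      push Not at this
      obtain ⟨σ, hσ, hσj⟩ := this
      let b : ι → K := fun l => σ (a' l) - a' l
      have hbi : b i = 0 := by simp [b, ha'i]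
      have hb : ∑ l ∈ s, b l • c l ∈ W := by
        have h1 := W.sub_mem (hW σ hσ _ ha') ha'
        rw [Finset.smul_sum, ← Finset.sum_sub_distrib] at h1
        convert! h1 using 2 with l hl
        rw [hsl, hc l σ hσ, ← sub_smul]
      have hji : j ≠ i := by
        rintro rfl
        exact hσj (by rw [ha'i, map_one])
      rw [← Finset.add_sum_erase s _ hi, hbi, zero_smul, zero_add] at hb
      obtain ⟨m, hm, hmW, l, hl, hml⟩ := ih (s.erase i)
        (by rw [Finset.card_erase_of_mem hi, hs]; rfl) b hb
        ⟨j, Finset.mem_erase.2 ⟨hji, hj⟩, sub_ne_zero.2 hσj⟩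
      refine ⟨fun l => if l = i then 0 else m l, ?_, ?_, l, Finset.mem_of_mem_erase hl, ?_⟩
      · intro l
        by_cases h : l = i
        · simpa [h] using M.zero_mem
        · simpa [h] using hm l
      · rw [← Finset.add_sum_erase s _ hi]
        simp only [if_true, zero_smul, zero_add]
        rw [Finset.sum_congr rfl (g := fun j => m j • c j)]
        · exact hmW
        · intro j hj
          simp [Finset.ne_of_mem_erase hj]
      · simpa [Finset.ne_of_mem_erase hl] using hml

/-- A subrepresentation of a representation spanned by invariants is spanned by invariants. -/
lemma sub_spanned (hsl : ∀ (σ : K ≃ₐ[k] K) (a : K) (v : V), σ • (a • v) = σ a • σ • v)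
    (M : IntermediateField k K)
    (hfix : ∀ x : K, (∀ σ : K ≃ₐ[k] K, (∀ y ∈ M, σ y = y) → σ x = x) → x ∈ M)
    (W : Submodule K V) (hW : ∀ σ : K ≃ₐ[k] K, (∀ y ∈ M, σ y = y) → ∀ w ∈ W, σ • w ∈ W)
    {w : V} (hw : w ∈ W) (hw' : w ∈ Submodule.span K {v : V | FixedBy M v}) :
    w ∈ Submodule.span K {v : V | v ∈ W ∧ FixedBy M v} := by
  classical
  have hfixM : ∀ (σ : K ≃ₐ[k] K), (∀ y ∈ M, σ y = y) → ∀ (s : Finset V) (m : V → K),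
      (∀ i, m i ∈ M) → (∀ i ∈ s, FixedBy M i) →
      σ • (∑ i ∈ s, m i • i) = ∑ i ∈ s, m i • i := by
    intro σ hσ s m hm hs
    rw [Finset.smul_sum]
    refine Finset.sum_congr rfl fun i hi => ?_
    rw [hsl, hs i hi σ hσ, hσ _ (hm i)]
  have key : ∀ (n : ℕ) (s : Finset V) (_ : s.card = n) (_ : ∀ v ∈ s, FixedBy M v) (a : V → K),
      ∑ i ∈ s, a i • i ∈ W →
      ∑ i ∈ s, a i • i ∈ Submodule.span K {v : V | v ∈ W ∧ FixedBy M v} := by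
    intro n
    induction n with
    | zero =>
      intro s hs _ a _
      rw [Finset.card_eq_zero] at hs
      simp [hs]
    | succ n ih =>
      intro s hs hsM a ha
      by_cases h0 : ∃ i ∈ s, a i ≠ 0
      · obtain ⟨m, hm, hmW, i, hi, hmi⟩ := rel_of_rel hsl M hfix W hW
          (fun i : {v : V // FixedBy M v} => (i : V)) (fun i => i.2) _
          (s.subtype (FixedBy M)) rfl (fun i => a i)
          (by
            rw [Finset.sum_subtype_of_mem (fun v => a v • v) (p := FixedBy M) hsM]
            exact ha)
          (by
            obtain ⟨i, hi, hai⟩ := h0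
            exact ⟨⟨i, hsM i hi⟩, by simpa using hi, hai⟩)
        let m' : V → K := fun v => if h : FixedBy M v then m ⟨v, h⟩ else 0
        have hm'M : ∀ v, m' v ∈ M := by
          intro v
          by_cases h : FixedBy M v
          · simpa [m', h] using hm ⟨v, h⟩
          · simpa [m', h] using M.zero_mem
        have hm'W : ∑ v ∈ s, m' v • v ∈ W := by
          rw [← Finset.sum_subtype_of_mem (fun v => m' v • v) (p := FixedBy M) hsM]
          convert! hmW using 2 with j hj
          simp [m', j.2]
        have hm'i : m' i ≠ 0 := by simpa [m', i.2] using hmi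
        have his : (i : V) ∈ s := by simpa using hi
        have hsum : ∑ v ∈ s, a v • v = (a i * (m' i)⁻¹) • (∑ v ∈ s, m' v • v) +
            ∑ v ∈ s.erase i, (a v - a i * (m' i)⁻¹ * m' v) • v := by
          have h1 : ∑ v ∈ s.erase (i : V), (a v - a i * (m' i)⁻¹ * m' v) • v =
              ∑ v ∈ s, (a v - a i * (m' i)⁻¹ * m' v) • v := by
            rw [← Finset.add_sum_erase s _ his]
            rw [mul_assoc, inv_mul_cancel₀ hm'i, mul_one, sub_self, zero_smul, zero_add]
          rw [h1, Finset.smul_sum, ← Finset.sum_add_distrib]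
          refine Finset.sum_congr rfl fun v _ => ?_
          rw [smul_smul, ← add_smul]
          congr 1
          ring
        have hmem : ∑ v ∈ s.erase (i : V), (a v - a i * (m' i)⁻¹ * m' v) • v ∈ W := by
          have := W.sub_mem ha (W.smul_mem (a i * (m' i)⁻¹) hm'W)
          rwa [hsum, add_sub_cancel_left] at this
        rw [hsum]
        refine Submodule.add_mem _ (Submodule.smul_mem _ _ (Submodule.subset_span ⟨hm'W, ?_⟩))
          (ih _ (by rw [Finset.card_erase_of_mem his, hs]; rfl)
            (fun v hv => hsM v (Finset.mem_of_mem_erase hv)) _ hmem)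
        exact fun σ hσ => hfixM σ hσ s m' hm'M hsM
      · push Not at h0
        rw [Finset.sum_eq_zero fun i hi => by rw [h0 i hi, zero_smul]]
        exact Submodule.zero_mem _
  obtain ⟨c, hc, rfl⟩ := Submodule.mem_span_set.1 hw'
  exact key _ c.support rfl (fun v hv => hc hv) c hw

lemma specialize_rel (hsl : ∀ (σ : K ≃ₐ[k] K) (a : K) (v : V), σ • (a • v) = σ a • σ • v)
    (M : IntermediateField k K)
    (hfix : ∀ x : K, (∀ σ : K ≃ₐ[k] K, (∀ y ∈ M, σ y = y) → σ x = x) → x ∈ M)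
    {ι : Type} {u : ι → K} (hu : AlgebraicIndependent M u) (u₀ : ι → K)
    {J : Type*} [DecidableEq J] (c : J → V) (hc : ∀ i, FixedBy M (c i)) :
    ∀ (n : ℕ) (s : Finset J) (_ : s.card = n) (q : J → MvPolynomial ι M),
      ∑ j ∈ s, MvPolynomial.aeval u (q j) • c j = 0 →
      ∑ j ∈ s, MvPolynomial.aeval u₀ (q j) • c j = 0 := by
  intro n
  induction n with
  | zero =>
    intro s hs q _
    rw [Finset.card_eq_zero] at hs
    simp [hs]
  | succ n ih =>
    intro s hs q hq
    by_cases h0 : ∃ j ∈ s, MvPolynomial.aeval u (q j) ≠ 0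
    · obtain ⟨m, hm, hmW, i, hi, hmi⟩ := rel_of_rel hsl M hfix ⊥
        (fun σ _ w hw => by
          rw [Submodule.mem_bot] at hw ⊢
          rw [hw, smul_zero]) c hc _ s rfl _ (by rw [hq]; exact Submodule.zero_mem _) h0
      rw [Submodule.mem_bot] at hmW
      let m' : J → M := fun j => ⟨m j, hm j⟩
      let e : J → M := fun j => (m' i)⁻¹ * m' j
      have hei : e i = 1 := inv_mul_cancel₀ (fun h => hmi (congrArg Subtype.val h))
      have he : ∑ j ∈ s, (e j : K) • c j = 0 := by
        have h2 : ∀ j, (e j : K) = (m i)⁻¹ * m j := fun j => rfl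
        simp only [h2, ← smul_smul]
        rw [← Finset.smul_sum, hmW, smul_zero]
      have key : ∀ w : ι → K,
          ∑ j ∈ s.erase i, MvPolynomial.aeval w (q j - MvPolynomial.C (e j) * q i) • c j =
          ∑ j ∈ s, MvPolynomial.aeval w (q j) • c j := by
        intro w
        have h1 : ∑ j ∈ s.erase i, MvPolynomial.aeval w (q j - MvPolynomial.C (e j) * q i) • c j =
            ∑ j ∈ s, MvPolynomial.aeval w (q j - MvPolynomial.C (e j) * q i) • c j := by
          rw [← Finset.add_sum_erase s _ hi, hei, map_one, one_mul, sub_self, map_zero, zero_smul,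
            zero_add]
        rw [h1]
        have h3 : ∑ j ∈ s, (MvPolynomial.aeval w (q i) * (e j : K)) • c j = 0 := by
          simp only [← smul_smul]
          rw [← Finset.smul_sum, he, smul_zero]
        rw [← sub_zero (∑ j ∈ s, MvPolynomial.aeval w (q j) • c j), ← h3,
          ← Finset.sum_sub_distrib]
        refine Finset.sum_congr rfl fun j _ => ?_
        rw [← sub_smul]
        congr 1
        rw [map_sub, map_mul, MvPolynomial.aeval_C, mul_comm]
        rfl
      rw [← key]
      refine ih _ (by rw [Finset.card_erase_of_mem hi, hs]; rfl) _ ?_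
      rw [key, hq]
    · push Not at h0
      refine Finset.sum_eq_zero fun j hj => ?_
      have : q j = 0 := hu.eq_zero_of_aeval_eq_zero _ (h0 j hj)
      rw [this, map_zero, zero_smul]

lemma smul_eq_of_agree {M : IntermediateField k K} {v : V} (hv : FixedBy M v)
    {σ τ : K ≃ₐ[k] K} (h : ∀ y ∈ M, σ y = τ y) : σ • v = τ • v := by
  have := hv (τ⁻¹ * σ) (fun y hy => by
    rw [AlgEquiv.mul_apply, h y hy]
    exact τ.symm_apply_apply y)
  rw [mul_smul, inv_smul_eq_iff] at this
  exact this

lemma aeval_lift {ι : Type} {M : Type*} [CommRing M] [Algebra k M] [Algebra M K]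
    [IsScalarTower k M K] (t : ι → M) (w : ι → K) (p : MvPolynomial (ι ⊕ ι) k) :
    MvPolynomial.aeval w (MvPolynomial.aeval
      (Sum.elim (fun i => MvPolynomial.C (t i)) MvPolynomial.X : ι ⊕ ι → MvPolynomial ι M) p) =
    MvPolynomial.aeval (Sum.elim (fun i => algebraMap M K (t i)) w) p := by
  have : ((MvPolynomial.aeval w : MvPolynomial ι M →ₐ[M] K).restrictScalars k).comp
      (MvPolynomial.aeval
        (Sum.elim (fun i => MvPolynomial.C (t i)) MvPolynomial.X : ι ⊕ ι → MvPolynomial ι M)) =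
      MvPolynomial.aeval (Sum.elim (fun i => algebraMap M K (t i)) w) := by
    apply MvPolynomial.algHom_ext
    rintro (i | i) <;> simp
  exact DFunLike.congr_fun this p

variable [IsAlgClosed K] [CharZero k]

lemma descend_finite
    (htr : ∀ L : IntermediateField k K, L.FG → ∃ x : K, Transcendental L x)
    (hsl : ∀ (σ : K ≃ₐ[k] K) (a : K) (v : V), σ • (a • v) = σ a • σ • v)
    {L₀ L : IntermediateField k K} (hL₀ : L₀.FG) (hle : L₀ ≤ L)
    [FiniteDimensional L₀ (IntermediateField.extendScalars hle)]
    (A : Submodule K V) (hA : ∀ σ : K ≃ₐ[k] K, ∀ v ∈ A, σ • v ∈ A)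
    {f : V} (hfA : f ∈ A) (hf : FixedBy L f) :
    f ∈ Submodule.span K {v : V | v ∈ A ∧ FixedBy L₀ v} := by
  let N := IntermediateField.extendScalars hle
  have hfd : FiniteDimensional L₀ N := inferInstanceAs
    (FiniteDimensional L₀ (IntermediateField.extendScalars hle))
  have hN : N.FG := by
    rw [← IntermediateField.essFiniteType_iff]
    infer_instance
  have hext : ∀ φ : N →ₐ[L₀] K, ∃ σ : K ≃ₐ[L₀] K, ∀ x : N, σ x = φ x :=
    fun φ => exists_extension (htr_of_fg htr hL₀) hN φ
  choose S hS using hext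
  let R : (N →ₐ[L₀] K) → (K ≃ₐ[k] K) := fun φ => (S φ).restrictScalars k
  have hR : ∀ φ (x : N), R φ x = φ x := hS
  have : Fintype (N →ₐ[L₀] K) := Fintype.ofFinite _
  by_contra hnot
  obtain ⟨ℓ, hℓ, hker⟩ := Submodule.exists_le_ker_of_notMem hnot
  have hinv : ∀ c : N, ∑ φ : N →ₐ[L₀] K, R φ • ((c : K) • f) ∈
      {v : V | v ∈ A ∧ FixedBy L₀ v} := by
    intro c
    refine ⟨A.sum_mem fun φ _ => hA _ _ (A.smul_mem _ hfA), fun g hg => ?_⟩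
    have hcf : FixedBy L ((c : K) • f) := fun σ hσ => by
      rw [hsl, hσ _ c.2, hf σ hσ]
    let g' : K ≃ₐ[L₀] K := AlgEquiv.ofRingEquiv (f := g.toRingEquiv) fun x => hg x x.2
    let E : (N →ₐ[L₀] K) ≃ (N →ₐ[L₀] K) :=
      { toFun := fun φ => g'.toAlgHom.comp φ
        invFun := fun φ => g'.symm.toAlgHom.comp φ
        left_inv := fun φ => by ext x; exact g'.symm_apply_apply _
        right_inv := fun φ => by ext x; exact g'.apply_symm_apply _ }
    rw [Finset.smul_sum, ← E.sum_comp (fun φ => R φ • ((c : K) • f))]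
    refine Finset.sum_congr rfl fun φ _ => ?_
    rw [← mul_smul]
    refine smul_eq_of_agree hcf fun y hy => ?_
    have h1 := hR φ ⟨y, hy⟩
    have h2 := hR (E φ) ⟨y, hy⟩
    change R φ y = _ at h1
    change R (E φ) y = _ at h2
    rw [h2, AlgEquiv.mul_apply, h1]
    rfl
  have hrel : ∑ φ : N →ₐ[L₀] K, (ℓ (R φ • f)) • φ.toLinearMap = 0 := by
    ext c
    have := LinearMap.mem_ker.1 (hker (Submodule.subset_span (hinv c)))
    rw [map_sum] at this
    rw [LinearMap.sum_apply, LinearMap.zero_apply, ← this]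
    refine Finset.sum_congr rfl fun φ _ => ?_
    rw [hsl, hR, ℓ.map_smul (φ c), LinearMap.smul_apply, smul_eq_mul, smul_eq_mul, mul_comm]
    rfl
  have hli := Fintype.linearIndependent_iff.1 (linearIndependent_toLinearMap L₀ N K) _ hrel N.val
  apply hℓ
  rw [← hli]
  congr 1
  refine (hf _ fun y hy => ?_).symm
  exact hR N.val ⟨y, hy⟩

end

section
variable {k K : Type} [Field k] [Field K] [Algebra k K]

lemma indep_pair {ι : Type} {t u : ι → K} (ht : AlgebraicIndependent k t)
    {M : IntermediateField k K} (hM : ∀ i, t i ∈ M) (hu : AlgebraicIndependent M u) :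
    AlgebraicIndependent k (Sum.elim t u) := by
  have h := AlgebraicIndependent.sumElim_of_tower (S := M) ht
    (by rintro _ ⟨i, rfl⟩; exact ⟨⟨t i, hM i⟩, rfl⟩) hu
  have h2 := h.comp (Equiv.sumComm ι ι) (Equiv.sumComm ι ι).injective
  convert! h2 using 1
  ext (i | i) <;> rfl

lemma common_denominator {ι : Type} {w : ι → K} {J : Type*} [DecidableEq J] (c : J → K)
    (S : Finset J) (h : ∀ v ∈ S, c v ∈ IntermediateField.adjoin k (Set.range w)) :
    ∃ (D : MvPolynomial ι k) (p : J → MvPolynomial ι k), MvPolynomial.aeval w D ≠ 0 ∧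
      ∀ v ∈ S, MvPolynomial.aeval w D * c v = MvPolynomial.aeval w (p v) := by
  induction S using Finset.induction_on with
  | empty => exact ⟨1, fun _ => 0, by simp, by simp⟩
  | insert a S ha ih =>
    obtain ⟨D, p, hD, hp⟩ := ih fun v hv => h v (Finset.mem_insert_of_mem hv)
    obtain ⟨r, d, hrd⟩ := (IntermediateField.mem_adjoin_range_iff k w _).1
      (h a (Finset.mem_insert_self a S))
    by_cases hd : MvPolynomial.aeval w d = 0
    · refine ⟨D, fun v => if v = a then 0 else p v, hD, fun v hv => ?_⟩
      by_cases hva : v = a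
      · simp [hva, hrd, hd]
      · simp only [hva, if_false]
        exact hp v (Finset.mem_of_mem_insert_of_ne hv hva)
    · refine ⟨D * d, fun v => if v = a then D * r else d * p v, ?_, fun v hv => ?_⟩
      · rw [map_mul]
        exact mul_ne_zero hD hd
      · by_cases hva : v = a
        · simp only [hva, if_true, hrd, map_mul]
          field_simp
        · simp only [hva, if_false, map_mul]
          rw [← hp v (Finset.mem_of_mem_insert_of_ne hv hva)]
          ring

lemma map_aeval' {ι : Type} (σ : K ≃ₐ[k] K) (w : ι → K) (p : MvPolynomial ι k) :
    σ (MvPolynomial.aeval w p) = MvPolynomial.aeval (fun i => σ (w i)) p :=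
  MvPolynomial.comp_aeval_apply w σ.toAlgHom p

lemma agree_adjoin {σ τ : K ≃ₐ[k] K} {s : Set K} (h : ∀ x ∈ s, σ x = τ x) :
    ∀ y ∈ IntermediateField.adjoin k s, σ y = τ y := by
  intro y hy
  induction hy using IntermediateField.adjoin_induction with
  | mem x hx => exact h x hx
  | algebraMap x => rw [σ.commutes, τ.commutes]
  | add x y _ _ hx hy => rw [map_add, map_add, hx, hy]
  | inv x _ hx => rw [map_inv₀, map_inv₀, hx]
  | mul x y _ _ hx hy => rw [map_mul, map_mul, hx, hy]

variable {V : Type} [AddCommGroup V] [Module K V] [DistribMulAction (K ≃ₐ[k] K) V]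
variable [IsAlgClosed K] [CharZero k]

/-- The key specialization argument. -/
lemma specialized_fixed
    (htr : ∀ L : IntermediateField k K, L.FG → ∃ x : K, Transcendental L x)
    (hsl : ∀ (σ : K ≃ₐ[k] K) (a : K) (v : V), σ • (a • v) = σ a • σ • v)
    {ι : Type} [Finite ι] {t s : ι → K} (ht : AlgebraicIndependent k t)
    (hts : AlgebraicIndependent k (Sum.elim t s))
    {F : V} (hF : FixedBy (IntermediateField.adjoin k (Set.range s)) F)
    (S : Finset V) (hS : ∀ v ∈ S, FixedBy (IntermediateField.adjoin k (Set.range t)) v)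
    (D : MvPolynomial (ι ⊕ ι) k) (p : V → MvPolynomial (ι ⊕ ι) k)
    (hrel : MvPolynomial.aeval (Sum.elim t s) D • F =
      ∑ v ∈ S, MvPolynomial.aeval (Sum.elim t s) (p v) • v)
    (s₀ : ι → K) (hs₀ : ∀ (σ : K ≃ₐ[k] K) i, σ (s₀ i) = s₀ i) (ρ : K ≃ₐ[k] K) :
    MvPolynomial.aeval (Sum.elim (fun i => ρ (t i)) s₀) D •
        ∑ v ∈ S, MvPolynomial.aeval (Sum.elim t s₀) (p v) • v =
      MvPolynomial.aeval (Sum.elim t s₀) D •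
        ρ • ∑ v ∈ S, MvPolynomial.aeval (Sum.elim t s₀) (p v) • v := by
  classical
  let t' : ι → K := fun i => ρ (t i)
  have ht' : AlgebraicIndependent k t' := ht.map' (f := ρ.toAlgHom) ρ.injective
  let M := IntermediateField.adjoin k (Set.range t ∪ Set.range t')
  have hMfg : M.FG := IntermediateField.fg_adjoin_of_finite
    ((Set.finite_range t).union (Set.finite_range t'))
  have htM : ∀ i, t i ∈ M := fun i => IntermediateField.subset_adjoin _ _ (Or.inl ⟨i, rfl⟩)
  have ht'M : ∀ i, t' i ∈ M := fun i => IntermediateField.subset_adjoin _ _ (Or.inr ⟨i, rfl⟩)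
  have hLM : IntermediateField.adjoin k (Set.range t) ≤ M :=
    IntermediateField.adjoin.mono _ _ _ Set.subset_union_left
  have hL'M : IntermediateField.adjoin k (Set.range t') ≤ M :=
    IntermediateField.adjoin.mono _ _ _ Set.subset_union_right
  obtain ⟨u, hu⟩ := exists_generic htr hMfg ι
  have htu := indep_pair ht htM hu
  have ht'u := indep_pair ht' ht'M hu
  obtain ⟨g, hg⟩ := exists_conj htr hts htu
  obtain ⟨ρ', hρ'⟩ := exists_conj htr htu ht'u
  have hgt : ∀ i, g (t i) = t i := fun i => hg (Sum.inl i)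
  have hgs : ∀ i, g (s i) = u i := fun i => hg (Sum.inr i)
  have hρt : ∀ i, ρ' (t i) = t' i := fun i => hρ' (Sum.inl i)
  have hρu : ∀ i, ρ' (u i) = u i := fun i => hρ' (Sum.inr i)
  have hgv : ∀ v ∈ S, g • v = v := fun v hv => hS v hv g fun y hy => by
    refine (agree_adjoin (τ := AlgEquiv.refl) ?_ y hy)
    rintro _ ⟨i, rfl⟩
    exact hgt i
  have hρv : ∀ v ∈ S, ρ' • v = ρ • v := fun v hv => smul_eq_of_agree (hS v hv) fun y hy => by
    refine (agree_adjoin ?_ y hy)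
    rintro _ ⟨i, rfl⟩
    exact hρt i
  have hFu : ρ' • g • F = g • F := by
    rw [← mul_smul]
    refine smul_eq_of_agree hF fun y hy => ?_
    refine (agree_adjoin ?_ y hy)
    rintro _ ⟨i, rfl⟩
    rw [AlgEquiv.mul_apply, hgs, hρu]
  have hρvfix : ∀ v ∈ S, FixedBy (IntermediateField.adjoin k (Set.range t')) (ρ • v) := by
    intro v hv σ hσ
    rw [← mul_smul]
    refine smul_eq_of_agree (hS v hv) fun y hy => ?_
    refine (agree_adjoin ?_ y hy)
    rintro _ ⟨i, rfl⟩
    exact hσ _ (IntermediateField.subset_adjoin _ _ ⟨i, rfl⟩)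
  -- the relation for `(t, u)`
  have rel1 : MvPolynomial.aeval (Sum.elim t u) D • (g • F) =
      ∑ v ∈ S, MvPolynomial.aeval (Sum.elim t u) (p v) • v := by
    have := congrArg (g • ·) hrel
    simp only [hsl, Finset.smul_sum, map_aeval', hg] at this
    rw [this]
    exact Finset.sum_congr rfl fun v hv => by rw [hgv v hv]
  have rel2 : MvPolynomial.aeval (Sum.elim t' u) D • (g • F) =
      ∑ v ∈ S, MvPolynomial.aeval (Sum.elim t' u) (p v) • ρ • v := by
    have := congrArg (ρ' • ·) rel1
    simp only [hsl, Finset.smul_sum, map_aeval', hρ', hFu] at this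
    rw [this]
    exact Finset.sum_congr rfl fun v hv => by rw [hρv v hv]
  let tM : ι → M := fun i => ⟨t i, htM i⟩
  let tM' : ι → M := fun i => ⟨t' i, ht'M i⟩
  let lift (r : ι → M) (q : MvPolynomial (ι ⊕ ι) k) : MvPolynomial ι M := MvPolynomial.aeval
      (Sum.elim (fun i => MvPolynomial.C (r i)) MvPolynomial.X : ι ⊕ ι → MvPolynomial ι M) q
  have hl : ∀ (w : ι → K) q, MvPolynomial.aeval w (lift tM q) =
    MvPolynomial.aeval (Sum.elim t w) q := fun w q => aeval_lift tM w q
  have hl' : ∀ (w : ι → K) q, MvPolynomial.aeval w (lift tM' q) =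
    MvPolynomial.aeval (Sum.elim t' w) q := fun w q => aeval_lift tM' w q
  let q : {v // v ∈ S} ⊕ {v // v ∈ S} → MvPolynomial ι M :=
    Sum.elim (fun v => lift tM' D * lift tM (p v)) (fun v => - (lift tM D * lift tM' (p v)))
  let c : {v // v ∈ S} ⊕ {v // v ∈ S} → V := Sum.elim (fun v => v) (fun v => ρ • (v : V))
  have hsum : ∀ w : ι → K, ∑ j : {v // v ∈ S} ⊕ {v // v ∈ S}, MvPolynomial.aeval w (q j) • c j =
      MvPolynomial.aeval (Sum.elim t' w) D • (∑ v ∈ S, MvPolynomial.aeval (Sum.elim t w) (p v) • v)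
      - MvPolynomial.aeval (Sum.elim t w) D •
        (∑ v ∈ S, MvPolynomial.aeval (Sum.elim t' w) (p v) • ρ • v) := by
    intro w
    rw [Fintype.sum_sum_type, sub_eq_add_neg]
    congr 1
    · simp only [q, c, Sum.elim_inl, map_mul, hl, hl']
      rw [Finset.smul_sum, ← Finset.sum_coe_sort S]
      simp only [mul_smul]
    · simp only [q, c, Sum.elim_inr, map_neg, map_mul, hl, hl', neg_smul]
      rw [Finset.smul_sum, ← Finset.sum_coe_sort S, Finset.sum_neg_distrib]
      simp only [mul_smul]
  have key := specialize_rel hsl M (fun x hx => mem_of_fixed htr hMfg hx) hu s₀ c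
    (by
      rintro (v | v)
      · exact fun σ hσ => hS v v.2 σ fun y hy => hσ y (hLM hy)
      · exact fun σ hσ => hρvfix v v.2 σ fun y hy => hσ y (hL'M hy)) _ Finset.univ rfl q
    (by
      rw [hsum, ← rel1, ← rel2, smul_smul, smul_smul, mul_comm, sub_self])
  rw [hsum, sub_eq_zero] at key
  rw [key]
  congr 1
  rw [Finset.smul_sum]
  refine Finset.sum_congr rfl fun v _ => ?_
  rw [hsl, map_aeval']
  congr 3
  ext (i | i)
  · rfl
  · exact (hs₀ ρ i).symm

end

section
variable {k K : Type} [Field k] [Field K] [Algebra k K]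
variable {V : Type} [AddCommGroup V] [Module K V] [DistribMulAction (K ≃ₐ[k] K) V]
variable [IsAlgClosed K] [CharZero k]

lemma descend_transcendental
    (htr : ∀ L : IntermediateField k K, L.FG → ∃ x : K, Transcendental L x)
    (hsl : ∀ (σ : K ≃ₐ[k] K) (a : K) (v : V), σ • (a • v) = σ a • σ • v)
    {ι : Type} [Finite ι] {t : ι → K} (ht : AlgebraicIndependent k t)
    (A : Submodule K V) (hA : ∀ σ : K ≃ₐ[k] K, ∀ v ∈ A, σ • v ∈ A)
    (hspan : ∀ f ∈ A, f ∈ Submodule.span K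
      {v : V | v ∈ A ∧ FixedBy (IntermediateField.adjoin k (Set.range t)) v})
    {f : V} (hfA : f ∈ A) (hf : FixedBy (IntermediateField.adjoin k (Set.range t)) f) :
    f ∈ Submodule.span K {v : V | v ∈ A ∧ ∀ σ : K ≃ₐ[k] K, σ • v = v} := by
  classical
  set L := IntermediateField.adjoin k (Set.range t) with hLdef
  have hLfg : L.FG := IntermediateField.fg_adjoin_of_finite (Set.finite_range t)
  have htL : ∀ i, t i ∈ L := fun i => IntermediateField.subset_adjoin _ _ ⟨i, rfl⟩
  obtain ⟨s, hs⟩ := exists_generic htr hLfg ι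
  have hts := indep_pair ht htL hs
  have hsk : AlgebraicIndependent k s := hs.restrictScalars (algebraMap k L).injective
  obtain ⟨τ, hτ⟩ := exists_conj htr ht hsk
  set F := τ • f with hFdef
  have hFA : F ∈ A := hA τ f hfA
  have hF : FixedBy (IntermediateField.adjoin k (Set.range s)) F := by
    intro σ hσ
    rw [hFdef, ← mul_smul]
    refine smul_eq_of_agree hf fun y hy => ?_
    refine (agree_adjoin ?_ y hy)
    rintro _ ⟨i, rfl⟩
    rw [AlgEquiv.mul_apply, hτ]
    exact hσ _ (IntermediateField.subset_adjoin _ _ ⟨i, rfl⟩)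
  -- expand
  obtain ⟨b, hbsub, hbspan, hbli⟩ := exists_linearIndependent K {v : V | v ∈ A ∧ FixedBy L v}
  obtain ⟨c, hcb, hcF⟩ := Submodule.mem_span_set.1 (hbspan.symm ▸ hspan F hFA)
  have hS : ∀ v ∈ c.support, v ∈ A ∧ FixedBy L v := fun v hv => hbsub (hcb hv)
  have hcfix : ∀ σ : K ≃ₐ[k] K, (∀ i, σ (t i) = t i) → (∀ i, σ (s i) = s i) →
      ∀ v ∈ c.support, σ (c v) = c v := by
    intro σ hσt hσs
    have hσL : ∀ y ∈ L, σ y = y := fun y hy => by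
      refine (agree_adjoin (τ := AlgEquiv.refl) ?_ y hy)
      rintro _ ⟨i, rfl⟩
      exact hσt i
    have hσF : σ • F = F := hF σ fun y hy => by
      refine (agree_adjoin (τ := AlgEquiv.refl) ?_ y hy)
      rintro _ ⟨i, rfl⟩
      exact hσs i
    have h1 : ∑ v ∈ c.support, σ (c v) • v = ∑ v ∈ c.support, c v • v := by
      have h2 : ∑ v ∈ c.support, c v • v = F := hcF
      rw [h2, ← hσF]
      conv_rhs => rw [← h2, Finset.smul_sum]
      exact Finset.sum_congr rfl fun v hv => by rw [hsl, (hS v hv).2 σ hσL]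
    intro v hv
    have h3 : ∑ v ∈ c.support, (σ (c v) - c v) • v = 0 := by
      simp only [sub_smul, Finset.sum_sub_distrib, h1, sub_self]
    have hbli' : LinearIndepOn K id b := hbli
    have := linearIndepOn_iff'.1 hbli' c.support (fun v => σ (c v) - c v) hcb h3 v hv
    exact sub_eq_zero.1 this
  have hcmem : ∀ v ∈ c.support, c v ∈ IntermediateField.adjoin k (Set.range (Sum.elim t s)) := by
    intro v hv
    refine mem_of_fixed htr (IntermediateField.fg_adjoin_of_finite (Set.finite_range _)) ?_
    intro σ hσ
    refine hcfix σ (fun i => ?_) (fun i => ?_) v hv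
    · exact hσ _ (IntermediateField.subset_adjoin _ _ ⟨Sum.inl i, rfl⟩)
    · exact hσ _ (IntermediateField.subset_adjoin _ _ ⟨Sum.inr i, rfl⟩)
  obtain ⟨D, p, hD, hp⟩ := common_denominator c c.support hcmem
  have hrel : MvPolynomial.aeval (Sum.elim t s) D • F =
      ∑ v ∈ c.support, MvPolynomial.aeval (Sum.elim t s) (p v) • v := by
    rw [← hcF, Finsupp.sum, Finset.smul_sum]
    exact Finset.sum_congr rfl fun v hv => by rw [smul_smul, hp v hv]
  set W := Submodule.span K {v : V | v ∈ A ∧ ∀ σ : K ≃ₐ[k] K, σ • v = v} with hW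
  -- specialized vectors
  have hspec : ∀ s₀ : ι → K, (∀ i, s₀ i ∈ Set.range (algebraMap k K)) →
      MvPolynomial.aeval (Sum.elim t s₀) D ≠ 0 →
      ∑ v ∈ c.support, MvPolynomial.aeval (Sum.elim t s₀) (p v) • v ∈ W := by
    intro s₀ hs₀ hD0
    have hs₀' : ∀ (σ : K ≃ₐ[k] K) i, σ (s₀ i) = s₀ i := by
      intro σ i
      obtain ⟨a, ha⟩ := hs₀ i
      rw [← ha, σ.commutes]
    set w := ∑ v ∈ c.support, MvPolynomial.aeval (Sum.elim t s₀) (p v) • v with hw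
    have hwA : w ∈ A := A.sum_mem fun v hv => A.smul_mem _ (hS v hv).1
    suffices h : (MvPolynomial.aeval (Sum.elim t s₀) D)⁻¹ • w ∈ W by
      have := W.smul_mem (MvPolynomial.aeval (Sum.elim t s₀) D) h
      rwa [smul_smul, mul_inv_cancel₀ hD0, one_smul] at this
    refine Submodule.subset_span ⟨A.smul_mem _ hwA, fun ρ => ?_⟩
    have key := specialized_fixed htr hsl ht hts hF c.support (fun v hv => (hS v hv).2) D p hrel
      s₀ hs₀' ρ
    have hρD : ρ (MvPolynomial.aeval (Sum.elim t s₀) D) =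
        MvPolynomial.aeval (Sum.elim (fun i => ρ (t i)) s₀) D := by
      rw [map_aeval']
      congr 2
      ext (i | i)
      · rfl
      · exact hs₀' ρ i
    rw [← hw, ← hρD] at key
    have hρD0 : ρ (MvPolynomial.aeval (Sum.elim t s₀) D) ≠ 0 := by
      simpa using hD0
    rw [hsl, map_inv₀, inv_smul_eq_iff₀ hρD0, smul_comm, key, smul_smul, inv_mul_cancel₀ hD0,
      one_smul]
  have hFW : F ∈ W := by
    by_contra hnot
    obtain ⟨ℓ, hℓ, hker⟩ := Submodule.exists_le_ker_of_notMem hnot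
    let lift (q : MvPolynomial (ι ⊕ ι) k) : MvPolynomial ι K := MvPolynomial.aeval
      (Sum.elim (fun i => MvPolynomial.C (t i)) MvPolynomial.X : ι ⊕ ι → MvPolynomial ι K) q
    have hl : ∀ (w : ι → K) q, MvPolynomial.aeval w (lift q) =
      MvPolynomial.aeval (Sum.elim t w) q := fun w q => aeval_lift t w q
    let P : MvPolynomial ι K := ∑ v ∈ c.support, MvPolynomial.C (ℓ v) * lift (p v)
    have hP : ∀ w : ι → K, MvPolynomial.aeval w P =
        ℓ (∑ v ∈ c.support, MvPolynomial.aeval (Sum.elim t w) (p v) • v) := by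
      intro w
      simp only [P, map_sum, map_mul, hl, MvPolynomial.aeval_C, LinearMap.map_smul, smul_eq_mul]
      exact Finset.sum_congr rfl fun v _ => mul_comm _ _
    have hQ : lift D * P = 0 := by
      refine MvPolynomial.funext_set (fun _ => Set.range (algebraMap k K)) (fun _ => ?_) ?_
      · exact Set.infinite_range_of_injective (algebraMap k K).injective
      · intro s₀ hs₀
        rw [map_zero, ← MvPolynomial.aeval_eq_eval, map_mul, hl]
        by_cases hD0 : MvPolynomial.aeval (Sum.elim t s₀) D = 0
        · rw [hD0, zero_mul]
        · rw [hP]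
          have := hker (hspec s₀ (fun i => hs₀ i trivial) hD0)
          rw [LinearMap.mem_ker.1 this, mul_zero]
    have hlD : lift D ≠ 0 := by
      intro h
      apply hD
      rw [← hl, h, map_zero]
    have hP0 := (mul_eq_zero.1 hQ).resolve_left hlD
    have h0 := hP s
    rw [hP0, map_zero, ← hrel, LinearMap.map_smul, smul_eq_mul] at h0
    exact (mul_ne_zero hD hℓ) h0.symm
  -- go back
  have hWstable : ∀ (σ : K ≃ₐ[k] K), ∀ w ∈ W, σ • w ∈ W := by
    intro σ w hw
    induction hw using Submodule.span_induction with
    | mem x hx => rw [hx.2 σ]; exact Submodule.subset_span hx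
    | zero => rw [smul_zero]; exact W.zero_mem
    | add x y _ _ hx hy => rw [smul_add]; exact W.add_mem hx hy
    | smul a x _ hx => rw [hsl]; exact W.smul_mem _ hx
  have := hWstable τ⁻¹ F hFW
  rwa [hFdef, inv_smul_smul] at this

/-- Main algebraic descent statement. -/
lemma descend_all
    (htr : ∀ L : IntermediateField k K, L.FG → ∃ x : K, Transcendental L x)
    (hsl : ∀ (σ : K ≃ₐ[k] K) (a : K) (v : V), σ • (a • v) = σ a • σ • v)
    (A : Submodule K V) (hA : ∀ σ : K ≃ₐ[k] K, ∀ v ∈ A, σ • v ∈ A)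
    {L : IntermediateField k K} (hL : L.FG)
    (hspan : A ≤ Submodule.span K {v : V | FixedBy L v}) :
    A ≤ Submodule.span K {v : V | v ∈ A ∧ ∀ σ : K ≃ₐ[k] K, σ • v = v} := by
  have h1 : ∀ f ∈ A, f ∈ Submodule.span K {v : V | v ∈ A ∧ FixedBy L v} := fun f hf =>
    sub_spanned hsl L (fun x hx => mem_of_fixed htr hL hx) A (fun σ _ => hA σ) hf (hspan hf)
  obtain ⟨s, rfl⟩ := hL
  obtain ⟨u, -, hu⟩ := exists_maximal_algebraicIndependent (R := k) (∅ : Set K) (s : Set K)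
    (Set.empty_subset _) ((algebraicIndependent_empty_iff k K).2 (algebraMap k K).injective)
  have huli : AlgebraicIndependent k (Subtype.val : u → K) := hu.1.1
  have hus : u ⊆ s := hu.1.2
  have hufin : u.Finite := s.finite_toSet.subset hus
  have : Finite u := hufin
  have hle : IntermediateField.adjoin k u ≤ IntermediateField.adjoin k (s : Set K) :=
    IntermediateField.adjoin.mono _ _ _ hus
  have hintegral : ∀ a ∈ (s : Set K), IsIntegral (IntermediateField.adjoin k u) a := by
    intro a ha
    rw [← isAlgebraic_iff_isIntegral, IntermediateField.isAlgebraic_adjoin_iff]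
    by_contra hna
    have h2 : AlgebraicIndepOn k id (insert a u) :=
      AlgebraicIndepOn.insert hu.1.1 (by rwa [Set.image_id])
    have h3 : a ∈ u := hu.2 ⟨h2, Set.insert_subset ha hus⟩ (Set.subset_insert _ _)
      (Set.mem_insert _ _)
    exact hna (isAlgebraic_algebraMap
      (⟨a, Algebra.subset_adjoin h3⟩ : Algebra.adjoin k u))
  have hfd : FiniteDimensional (IntermediateField.adjoin k u)
      (IntermediateField.extendScalars hle) := by
    rw [IntermediateField.extendScalars_adjoin hle]
    have : Finite (s : Set K) := s.finite_toSet
    exact IntermediateField.finiteDimensional_adjoin hintegral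
  have hL₀ : (IntermediateField.adjoin k u).FG := IntermediateField.fg_adjoin_of_finite hufin
  have h2 : ∀ f ∈ A, f ∈ Submodule.span K
      {v : V | v ∈ A ∧ FixedBy (IntermediateField.adjoin k u) v} := by
    intro f hf
    refine (Submodule.span_le.2 ?_) (h1 f hf)
    rintro v ⟨hvA, hv⟩
    exact descend_finite htr hsl hL₀ hle A hA hvA hv
  intro f hf
  refine (Submodule.span_le.2 ?_) (h2 f hf)
  rintro v ⟨hvA, hv⟩
  rw [← Subtype.range_val (s := u)] at hv h2
  exact descend_transcendental htr hsl huli A hA h2 hvA hv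

end

section
open scoped TensorProduct
variable {k K : Type} [Field k] [Field K] [Algebra k K] [IsAlgClosed K] [CharZero k]
variable {B : Type} [CommRing B] [Algebra K B] [Algebra k B] [IsScalarTower k K B]
  [MulSemiringAction (K ≃ₐ[k] K) B]

lemma hfix_bot (htr : ∀ L : IntermediateField k K, L.FG → ∃ x : K, Transcendental L x) (x : K)
    (hx : ∀ σ : K ≃ₐ[k] K, (∀ y ∈ (⊥ : IntermediateField k K), σ y = y) → σ x = x) :
    x ∈ (⊥ : IntermediateField k K) :=
  mem_of_fixed htr IntermediateField.fg_bot hx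

lemma invariants_isPushout
    (htr : ∀ L : IntermediateField k K, L.FG → ∃ x : K, Transcendental L x)
    (hsl : ∀ (σ : K ≃ₐ[k] K) (a : K) (v : B), σ • (a • v) = σ a • σ • v)
    (hspan : ∀ b : B, b ∈ Submodule.span K {v : B | ∀ σ : K ≃ₐ[k] K, σ • v = v})
    (B₀ : Subalgebra k B) (hB₀ : ∀ b, b ∈ B₀ ↔ ∀ σ : K ≃ₐ[k] K, σ • b = b) :
    Algebra.IsPushout k K B₀ B := by
  classical
  let b := Module.Basis.ofVectorSpace k B₀
  have hli : LinearIndependent K (fun i => (b i : B)) := by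
    rw [linearIndependent_iff']
    intro s a ha
    by_contra! hne
    obtain ⟨m, hm, hm0, i, hi, hmi⟩ := rel_of_rel hsl ⊥ (hfix_bot htr) ⊥
      (fun σ _ w hw => by
        rw [Submodule.mem_bot] at hw ⊢
        rw [hw, smul_zero]) (fun i => (b i : B))
      (fun i σ _ => (hB₀ _).1 (b i).2 σ) _ s rfl a (by rw [ha]; exact Submodule.zero_mem _) hne
    rw [Submodule.mem_bot] at hm0
    have : ∀ j, ∃ r : k, algebraMap k K r = m j := fun j => IntermediateField.mem_bot.1 (hm j)
    choose r hr using this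
    have hr0 : ∑ j ∈ s, r j • b j = 0 := by
      apply Subtype.ext
      rw [ZeroMemClass.coe_zero, ← hm0, AddSubmonoidClass.coe_finsetSum]
      refine Finset.sum_congr rfl fun j _ => ?_
      rw [← hr j, algebraMap_smul]
      rfl
    have := linearIndependent_iff'.1 b.linearIndependent s r hr0 i hi
    apply hmi
    rw [← hr, this, map_zero]
  have hsp : ⊤ ≤ Submodule.span K (Set.range fun i => (b i : B)) := by
    rintro x -
    refine Submodule.span_le.2 ?_ (hspan x)
    intro v hv
    have h1 : (⟨v, (hB₀ v).2 hv⟩ : B₀) ∈ Submodule.span k (Set.range b) := by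
      rw [b.span_eq]; trivial
    have h2 := Submodule.mem_map_of_mem (f := B₀.val.toLinearMap) h1
    rw [Submodule.map_span, ← Set.range_comp] at h2
    exact Submodule.span_le_restrictScalars k K _ h2
  constructor
  let bB := Module.Basis.mk hli hsp
  let e : TensorProduct k K B₀ ≃ₗ[K] B := (b.baseChange K).equiv bB (Equiv.refl _)
  refine IsBaseChange.of_equiv e fun x => ?_
  have : (e.toLinearMap.restrictScalars k).comp (TensorProduct.mk k K B₀ 1) =
      (IsScalarTower.toAlgHom k B₀ B).toLinearMap := by
    refine b.ext fun i => ?_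
    have h1 : (1 : K) ⊗ₜ[k] b i = b.baseChange K i := (b.baseChange_apply K i).symm
    change e ((1 : K) ⊗ₜ[k] b i) = (b i : B)
    rw [h1, Module.Basis.equiv_apply]
    simp [bB]
  exact DFunLike.congr_fun this x

lemma invariants_ideal
    (htr : ∀ L : IntermediateField k K, L.FG → ∃ x : K, Transcendental L x)
    (hsl : ∀ (σ : K ≃ₐ[k] K) (a : K) (v : B), σ • (a • v) = σ a • σ • v)
    (hspan : ∀ b : B, b ∈ Submodule.span K {v : B | ∀ σ : K ≃ₐ[k] K, σ • v = v})
    (B₀ : Subalgebra k B) (hB₀ : ∀ b, b ∈ B₀ ↔ ∀ σ : K ≃ₐ[k] K, σ • b = b)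
    (I : Ideal B) (hI : ∀ σ : K ≃ₐ[k] K, ∀ b ∈ I, σ • b ∈ I) :
    I ≤ (I.comap (algebraMap B₀ B)).map (algebraMap B₀ B) := by
  have hiff : ∀ v : B, FixedBy (⊥ : IntermediateField k K) v ↔ ∀ σ : K ≃ₐ[k] K, σ • v = v := by
    refine fun v => ⟨fun h σ => h σ ?_, fun h σ _ => h σ⟩
    intro y hy
    obtain ⟨r, rfl⟩ := IntermediateField.mem_bot.1 hy
    exact σ.commutes r
  intro x hx
  have h := sub_spanned hsl ⊥ (hfix_bot htr) (I.restrictScalars K) (fun σ _ w hw => hI σ w hw)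
    (w := x) hx (by simpa only [hiff] using hspan x)
  refine Submodule.span_le (p := ((I.comap (algebraMap B₀ B)).map
    (algebraMap B₀ B)).restrictScalars K) |>.2 ?_ h
  rintro v ⟨hvI, hv⟩
  have hv0 : v ∈ B₀ := (hB₀ v).2 ((hiff v).1 hv)
  exact Ideal.mem_map_of_mem (algebraMap B₀ B) (x := ⟨v, hv0⟩)
    (show (⟨v, hv0⟩ : B₀) ∈ I.comap (algebraMap B₀ B) from hvI)

lemma span_of_embedding {V : Type} [AddCommGroup V] [Module K V] [DistribMulAction (K ≃ₐ[k] K) V]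
    (htr : ∀ L : IntermediateField k K, L.FG → ∃ x : K, Transcendental L x)
    (hsl : ∀ (σ : K ≃ₐ[k] K) (a : K) (v : V), σ • (a • v) = σ a • σ • v)
    (f : B →ₗ[K] V) (hf : Function.Injective f)
    (hσ : ∀ (σ : K ≃ₐ[k] K) (b : B), f (σ • b) = σ • f b)
    {L : IntermediateField k K} (hL : L.FG)
    (hspan : ∀ b, f b ∈ Submodule.span K {v : V | FixedBy L v}) (b : B) :
    b ∈ Submodule.span K {v : B | ∀ σ : K ≃ₐ[k] K, σ • v = v} := by
  have h := descend_all htr hsl (LinearMap.range f)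
    (by rintro σ _ ⟨b, rfl⟩; exact ⟨σ • b, hσ σ b⟩) hL (by rintro _ ⟨b, rfl⟩; exact hspan b)
    (LinearMap.mem_range_self f b)
  have h2 : Submodule.span K {v : V | v ∈ LinearMap.range f ∧ ∀ σ : K ≃ₐ[k] K, σ • v = v} ≤
      (Submodule.span K {v : B | ∀ σ : K ≃ₐ[k] K, σ • v = v}).map f := by
    rw [Submodule.span_le]
    rintro _ ⟨⟨b, rfl⟩, hb⟩
    exact Submodule.mem_map_of_mem (Submodule.subset_span fun σ => hf (by rw [hσ, hb]))
  obtain ⟨b', hb', hbb'⟩ := h2 h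
  rwa [← hf hbb']

end

section
variable {k K : Type} [Field k] [Field K] [Algebra k K]
  {Y : Scheme} {p : Y ⟶ Spec (CommRingCat.of K)}

lemma germ_eqToHom {X : TopCat} (F : X.Presheaf CommRingCat) (U : TopologicalSpace.Opens X)
    {x y : X} (h : x = y) (hx : x ∈ U) :
    F.germ U x hx ≫ eqToHom (congrArg F.stalk h) = F.germ U y (h ▸ hx) := by
  subst h
  simp

lemma gen_mem_preimage [IrreducibleSpace Y] (e : Y ≅ Y) (W : Y.Opens) (hW : genericPoint Y ∈ W) :
    genericPoint Y ∈ e.hom ⁻¹ᵁ W := by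
  change e.hom.base (genericPoint Y) ∈ W
  rwa [aut_base_genericPoint e]

lemma germ_ffAction [IrreducibleSpace Y] (D : DescentDatum k K Y p) (σ : K ≃ₐ[k] K) (W : Y.Opens)
    (hW : genericPoint Y ∈ W) :
    Y.presheaf.germ W (genericPoint Y) hW ≫ D.ffAction σ =
      (D.act σ⁻¹ : Aut Y).hom.app W ≫
        Y.presheaf.germ ((D.act σ⁻¹ : Aut Y).hom ⁻¹ᵁ W) (genericPoint Y)
          (gen_mem_preimage (D.act σ⁻¹) W hW) := by
  rw [DescentDatum.ffAction, ← Category.assoc, germ_eqToHom _ _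
    (aut_base_genericPoint ((D.act σ⁻¹ : Aut Y) : Y ≅ Y)).symm]
  exact Scheme.Hom.germ_stalkMap _ W (genericPoint Y) _

lemma act_mul_hom (D : DescentDatum k K Y p) (σ τ : K ≃ₐ[k] K) :
    (D.act (σ * τ)⁻¹ : Aut Y).hom = (D.act σ⁻¹ : Aut Y).hom ≫ (D.act τ⁻¹ : Aut Y).hom := by
  rw [mul_inv_rev, map_mul, Aut.Aut_mul_def]
  rfl

lemma act_one_hom (D : DescentDatum k K Y p) :
    (D.act (1 : K ≃ₐ[k] K)⁻¹ : Aut Y).hom = 𝟙 Y := by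
  rw [inv_one, map_one]
  rfl

lemma germ_app_congr [IrreducibleSpace Y] {f g : Y ⟶ Y} (h : f = g) (W : Y.Opens)
    (hf : genericPoint Y ∈ f ⁻¹ᵁ W) (hg : genericPoint Y ∈ g ⁻¹ᵁ W) :
    f.app W ≫ Y.presheaf.germ (f ⁻¹ᵁ W) (genericPoint Y) hf =
      g.app W ≫ Y.presheaf.germ (g ⁻¹ᵁ W) (genericPoint Y) hg := by
  subst h
  rfl

lemma ffAction_one [IrreducibleSpace Y] (D : DescentDatum k K Y p) : D.ffAction 1 = 𝟙 _ := by
  refine TopCat.Presheaf.stalk_hom_ext _ fun W hW => ?_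
  rw [germ_ffAction, germ_app_congr (act_one_hom D) W _ (by simpa using hW)]
  exact (Category.id_comp _).trans (Category.comp_id _).symm

lemma ffAction_mul [IrreducibleSpace Y] (D : DescentDatum k K Y p) (σ τ : K ≃ₐ[k] K) :
    D.ffAction (σ * τ) = D.ffAction τ ≫ D.ffAction σ := by
  refine TopCat.Presheaf.stalk_hom_ext _ fun W hW => ?_
  have h0 := gen_mem_preimage (D.act τ⁻¹) W hW
  have h1 := gen_mem_preimage (D.act σ⁻¹) _ h0
  rw [germ_ffAction, germ_app_congr (act_mul_hom D σ τ) W _ h1, ← Category.assoc, germ_ffAction,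
    Category.assoc, germ_ffAction, Scheme.Hom.comp_app]
  exact Category.assoc _ _ _

/-- The action of `Aut(K/k)` on the function field. -/
@[reducible] def ffMulSemiringAction [IrreducibleSpace Y] (D : DescentDatum k K Y p) :
    MulSemiringAction (K ≃ₐ[k] K) Y.functionField where
  smul σ f := D.ffAction σ f
  one_smul f := by
    change D.ffAction 1 f = f
    rw [ffAction_one]
    rfl
  mul_smul σ τ f := by
    change D.ffAction (σ * τ) f = D.ffAction σ (D.ffAction τ f)
    rw [ffAction_mul]
    rfl
  smul_zero σ := map_zero (D.ffAction σ).hom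
  smul_add σ := map_add (D.ffAction σ).hom
  smul_one σ := map_one (D.ffAction σ).hom
  smul_mul σ := map_mul (D.ffAction σ).hom

/-- The action of `Aut(K/k)` on the global sections. -/
@[reducible] def globalMulSemiringAction (D : DescentDatum k K Y p) :
    MulSemiringAction (K ≃ₐ[k] K) Γ(Y, ⊤) where
  smul σ f := (D.act σ⁻¹ : Aut Y).hom.appTop f
  one_smul f := by
    change (D.act (1 : K ≃ₐ[k] K)⁻¹ : Aut Y).hom.appTop f = f
    rw [act_one_hom]
    simp
  mul_smul σ τ f := by
    change (D.act (σ * τ)⁻¹ : Aut Y).hom.appTop f =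
      (D.act σ⁻¹ : Aut Y).hom.appTop ((D.act τ⁻¹ : Aut Y).hom.appTop f)
    rw [act_mul_hom, Scheme.Hom.comp_appTop]
    rfl
  smul_zero σ := map_zero ((D.act σ⁻¹ : Aut Y).hom.appTop).hom
  smul_add σ := map_add ((D.act σ⁻¹ : Aut Y).hom.appTop).hom
  smul_one σ := map_one ((D.act σ⁻¹ : Aut Y).hom.appTop).hom
  smul_mul σ := map_mul ((D.act σ⁻¹ : Aut Y).hom.appTop).hom

/-- The structure map on global sections. -/
def globalMap (p : Y ⟶ Spec (CommRingCat.of K)) : CommRingCat.of K ⟶ Γ(Y, ⊤) :=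
  (Scheme.ΓSpecIso (CommRingCat.of K)).inv ≫ p.appTop

lemma globalMap_act (D : DescentDatum k K Y p) (σ : K ≃ₐ[k] K) (a : K) :
    (D.act σ⁻¹ : Aut Y).hom.appTop (globalMap p a) = globalMap p (σ a) := by
  have h := congrArg Scheme.Hom.appTop (D.compat σ⁻¹)
  rw [Scheme.Hom.comp_appTop, Scheme.Hom.comp_appTop, specAut] at h
  have h2 : globalMap p ≫ (D.act σ⁻¹ : Aut Y).hom.appTop =
      CommRingCat.ofHom ((σ : K ≃ₐ[k] K) : K →+* K) ≫ globalMap p := by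
    rw [globalMap, Category.assoc, h, ← Category.assoc, ← Category.assoc,
      Scheme.ΓSpecIso_inv_naturality, inv_inv]
  exact congrArg (fun f => f.hom a) h2

end

section
variable {k K : Type} [Field k] [Field K] [Algebra k K]
  {Y : Scheme} {p : Y ⟶ Spec (CommRingCat.of K)}

lemma fixedBy_adjoin {E : Type} [CommRing E] [Algebra K E] [MulSemiringAction (K ≃ₐ[k] K) E]
    (L : IntermediateField k K) (s : Set E) (hs : ∀ x ∈ s, FixedBy L x) (x : E)
    (hx : x ∈ Algebra.adjoin K s) : x ∈ Submodule.span K {v : E | FixedBy L v} := by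
  rw [← Subalgebra.mem_toSubmodule, Algebra.adjoin_eq_span] at hx
  refine Submodule.span_mono ?_ hx
  intro y hy
  induction hy using Submonoid.closure_induction with
  | mem x hx => exact hs x hx
  | one => exact fun σ _ => smul_one σ
  | mul x y _ _ hx hy => exact fun σ hσ => by rw [smul_mul', hx σ hσ, hy σ hσ]

/-- The function field as an algebra over `K`. -/
@[reducible] def ffAlgebra [IrreducibleSpace Y] (p : Y ⟶ Spec (CommRingCat.of K)) :
    Algebra K Y.functionField :=
  (globalMap p ≫ Y.presheaf.germ ⊤ (genericPoint Y) trivial).hom.toAlgebra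

/-- The global sections as an algebra over `K`. -/
@[reducible] def globalAlgebra (p : Y ⟶ Spec (CommRingCat.of K)) : Algebra K Γ(Y, ⊤) :=
  (globalMap p).hom.toAlgebra

lemma exists_affine_generators [IsIntegral Y] [LocallyOfFiniteType p] :
    letI := ffAlgebra p
    ∃ s : Finset Y.functionField, ∀ b : Γ(Y, ⊤),
      Y.presheaf.germ ⊤ (genericPoint Y) trivial b ∈ Algebra.adjoin K (s : Set Y.functionField) := by
  letI := ffAlgebra p
  obtain ⟨U, hU, hxU, -⟩ := exists_isAffineOpen_mem_and_subset
    (x := genericPoint Y) (U := ⊤) trivial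
  have hft := p.finiteType_appLE (isAffineOpen_top _) hU le_top
  let f : CommRingCat.of K ⟶ Γ(Y, U) :=
    (Scheme.ΓSpecIso (CommRingCat.of K)).inv ≫ p.appLE ⊤ U le_top
  have hf : f.hom.FiniteType := by
    refine RingHom.FiniteType.comp (g := (p.appLE ⊤ U le_top).hom)
      (f := (Scheme.ΓSpecIso (CommRingCat.of K)).inv.hom) hft
      (RingHom.FiniteType.of_surjective _ ?_)
    exact (Scheme.ΓSpecIso (CommRingCat.of K)).symm.commRingCatIsoToRingEquiv.surjective
  letI : Algebra K Γ(Y, U) := f.hom.toAlgebra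
  have hfin : Algebra.FiniteType K Γ(Y, U) := hf
  obtain ⟨s, hs⟩ := hfin.out
  have hcomp : f ≫ Y.presheaf.germ U (genericPoint Y) hxU =
      globalMap p ≫ Y.presheaf.germ ⊤ (genericPoint Y) trivial := by
    simp only [f, globalMap, Category.assoc, Scheme.Hom.appLE]
    congr 2
    exact TopCat.Presheaf.germ_res _ _ _ _
  let g : Γ(Y, U) →ₐ[K] Y.functionField :=
    { (Y.presheaf.germ U (genericPoint Y) hxU).hom with
      commutes' := fun a => congrArg (fun f => f.hom a) hcomp }
  classical
  refine ⟨s.image g, fun b => ?_⟩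
  have h1 : Y.presheaf.germ ⊤ (genericPoint Y) trivial b =
      g (Y.presheaf.map (homOfLE le_top).op b) := by
    exact (TopCat.Presheaf.germ_res_apply Y.presheaf (homOfLE le_top : U ⟶ ⊤) (genericPoint Y)
      hxU b).symm
  have h2 : Y.presheaf.map (homOfLE le_top).op b ∈ Algebra.adjoin K (s : Set Γ(Y, U)) := by
    rw [hs]; trivial
  have h3 : g (Y.presheaf.map (homOfLE le_top).op b) ∈
      (Algebra.adjoin K (s : Set Γ(Y, U))).map g := ⟨_, h2, rfl⟩
  rw [h1, Finset.coe_image, ← AlgHom.map_adjoin]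
  exact h3

lemma global_hsl (D : DescentDatum k K Y p) :
    letI := globalMulSemiringAction D
    letI := globalAlgebra p
    ∀ (σ : K ≃ₐ[k] K) (a : K) (v : Γ(Y, ⊤)), σ • (a • v) = σ a • σ • v := by
  letI := globalMulSemiringAction D
  letI := globalAlgebra p
  intro σ a v
  rw [Algebra.smul_def, Algebra.smul_def, smul_mul']
  congr 1
  exact globalMap_act D σ a

lemma germ_top_ffAction [IrreducibleSpace Y] (D : DescentDatum k K Y p) (σ : K ≃ₐ[k] K)
    (b : Γ(Y, ⊤)) : D.ffAction σ (Y.presheaf.germ ⊤ (genericPoint Y) trivial b) =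
      Y.presheaf.germ ⊤ (genericPoint Y) trivial ((D.act σ⁻¹ : Aut Y).hom.appTop b) :=
  congrArg (fun f => f.hom b) (germ_ffAction D σ ⊤ trivial)

lemma ff_hsl [IrreducibleSpace Y] (D : DescentDatum k K Y p) :
    letI := ffMulSemiringAction D
    letI := ffAlgebra p
    ∀ (σ : K ≃ₐ[k] K) (a : K) (v : Y.functionField), σ • (a • v) = σ a • σ • v := by
  letI := ffMulSemiringAction D
  letI := ffAlgebra p
  intro σ a v
  rw [Algebra.smul_def, Algebra.smul_def, smul_mul']
  congr 1
  refine (germ_top_ffAction D σ (globalMap p a)).trans ?_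
  rw [globalMap_act]
  rfl

lemma global_span [IsAlgClosed K] [CharZero k] [IsIntegral Y] [LocallyOfFiniteType p]
    (htr : ∀ L : IntermediateField k K, L.FG → ∃ x : K, Transcendental L x)
    (D : DescentDatum k K Y p) (hcont : D.IsContinuous) :
    letI := globalMulSemiringAction D
    letI := globalAlgebra p
    ∀ b : Γ(Y, ⊤), b ∈ Submodule.span K {v : Γ(Y, ⊤) | ∀ σ : K ≃ₐ[k] K, σ • v = v} := by
  letI := globalMulSemiringAction D
  letI := globalAlgebra p
  letI := ffMulSemiringAction D
  letI := ffAlgebra p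
  obtain ⟨s, hs⟩ := exists_affine_generators (p := p)
  choose L hLfg hL using hcont
  let M : IntermediateField k K := ⨆ x : {x // x ∈ s}, L x.1
  have hM : M.FG := IntermediateField.fg_iSup fun x => hLfg x.1
  have hsM : ∀ x ∈ (s : Set Y.functionField), FixedBy M x := by
    intro x hx σ hσ
    exact hL x σ fun y hy => hσ y ((le_iSup (fun x : {x // x ∈ s} => L x.1) ⟨x, hx⟩) hy)
  let f : Γ(Y, ⊤) →ₗ[K] Y.functionField :=
    { toFun := Y.presheaf.germ ⊤ (genericPoint Y) trivial
      map_add' := map_add (Y.presheaf.germ ⊤ (genericPoint Y) trivial).hom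
      map_smul' := fun a b => by
        rw [Algebra.smul_def, Algebra.smul_def]
        exact map_mul (Y.presheaf.germ ⊤ (genericPoint Y) trivial).hom _ _ }
  letI : Algebra k Γ(Y, ⊤) := ((globalMap p).hom.comp (algebraMap k K)).toAlgebra
  haveI : IsScalarTower k K Γ(Y, ⊤) := IsScalarTower.of_algebraMap_eq fun x => rfl
  refine span_of_embedding htr (ff_hsl D) f ?_ ?_ hM ?_
  · exact germ_injective_of_isIntegral Y (U := ⊤) (genericPoint Y) trivial
  · intro σ b
    exact (germ_top_ffAction D σ b).symm
  · intro b
    exact fixedBy_adjoin M _ hsM _ (hs b)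

end

section
variable {k K : Type} [Field k] [Field K] [Algebra k K]
  {Y : Scheme} {p : Y ⟶ Spec (CommRingCat.of K)}

lemma range_compl_stable (e : Y ≅ Y) (q : Spec Γ(Y, ⊤))
    (hq : q ∉ Set.range Y.toSpecΓ) :
    Spec.map e.hom.appTop q ∉ Set.range Y.toSpecΓ := by
  rintro ⟨y, hy⟩
  apply hq
  refine ⟨e.inv y, ?_⟩
  have h1 : Y.toSpecΓ (e.inv y) = Spec.map e.inv.appTop (Y.toSpecΓ y) := by
    rw [← Scheme.Hom.comp_apply, ← Scheme.Hom.comp_apply, Scheme.toSpecΓ_naturality]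
  rw [h1, hy, ← Scheme.Hom.comp_apply, ← Spec.map_comp, ← Scheme.Hom.comp_appTop, e.hom_inv_id]
  simp

/-- The ideal of the boundary of `Y` in `Spec Γ(Y, ⊤)`. -/
def boundaryIdeal (Y : Scheme) : Ideal Γ(Y, ⊤) :=
  PrimeSpectrum.vanishingIdeal (R := Γ(Y, ⊤)) (Set.range Y.toSpecΓ)ᶜ

lemma boundaryIdeal_stable (e : Y ≅ Y) (b : Γ(Y, ⊤)) (hb : b ∈ boundaryIdeal Y) :
    e.hom.appTop b ∈ boundaryIdeal Y := by
  rw [boundaryIdeal, PrimeSpectrum.mem_vanishingIdeal] at hb ⊢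
  intro q hq
  exact hb _ (range_compl_stable e q hq)

lemma exists_opens [IsOpenImmersion Y.toSpecΓ] {B₀ : CommRingCat} (i : B₀ ⟶ Γ(Y, ⊤))
    (hI : boundaryIdeal Y ≤ ((boundaryIdeal Y).comap i.hom).map i.hom) :
    ∃ X : (Spec B₀).Opens, Y.toSpecΓ.opensRange = Spec.map i ⁻¹ᵁ X := by
  let J := (boundaryIdeal Y).comap i.hom
  refine ⟨⟨(PrimeSpectrum.zeroLocus (J : Set B₀))ᶜ,
    (PrimeSpectrum.isClosed_zeroLocus _).isOpen_compl⟩, ?_⟩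
  have hcl : IsClosed ((Set.range Y.toSpecΓ)ᶜ : Set (PrimeSpectrum Γ(Y, ⊤))) :=
    Y.toSpecΓ.opensRange.isOpen.isClosed_compl
  have hz : PrimeSpectrum.zeroLocus (boundaryIdeal Y : Set Γ(Y, ⊤)) = (Set.range Y.toSpecΓ)ᶜ := by
    rw [boundaryIdeal, PrimeSpectrum.zeroLocus_vanishingIdeal_eq_closure]
    exact hcl.closure_eq
  have hz2 : PrimeSpectrum.zeroLocus (boundaryIdeal Y : Set Γ(Y, ⊤)) =
      PrimeSpectrum.comap i.hom ⁻¹' PrimeSpectrum.zeroLocus (J : Set B₀) := by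
    rw [PrimeSpectrum.preimage_comap_zeroLocus]
    have : boundaryIdeal Y = J.map i.hom := le_antisymm hI Ideal.map_comap_le
    rw [this, Ideal.map, PrimeSpectrum.zeroLocus_span]
  ext x
  have h : x ∈ (Set.range Y.toSpecΓ)ᶜ ↔ Spec.map i x ∈ PrimeSpectrum.zeroLocus (J : Set B₀) := by
    rw [← hz, hz2]; rfl
  have h' := not_congr h
  rw [Set.notMem_compl_iff] at h'
  exact h'

lemma toSpecΓ_globalMap : Y.toSpecΓ ≫ Spec.map (globalMap p) = p := by
  rw [globalMap, Spec.map_comp, ← Scheme.toSpecΓ_naturality_assoc, toSpecΓ_SpecMap_ΓSpecIso_inv,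
    Category.comp_id]

lemma scheme_descent {B₀ : CommRingCat} (D : DescentDatum k K Y p) (hft : LocallyOfFiniteType p)
    [CompactSpace Y] [IsOpenImmersion Y.toSpecΓ]
    (i : B₀ ⟶ Γ(Y, ⊤)) (s : CommRingCat.of k ⟶ B₀)
    (hpo : IsPushout (CommRingCat.ofHom (algebraMap k K)) s (globalMap p) i)
    (hinv : ∀ σ, i ≫ (D.act σ).hom.appTop = i)
    (X : (Spec B₀).Opens) (hX : Y.toSpecΓ.opensRange = Spec.map i ⁻¹ᵁ X) :
    ∃ (X : Scheme) (q : X ⟶ Spec (CommRingCat.of k)) (e : Y ≅ baseChange k K q),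
      e.hom ≫ pullback.snd q (Spec.map (CommRingCat.ofHom (algebraMap k K))) = p ∧
      (∀ σ : K ≃ₐ[k] K, (D.act σ).hom ≫ e.hom = e.hom ≫ baseChangeAut k K q σ) ∧
      QuasiAffineOver k q := by
  have hsub : Set.range (Y.toSpecΓ ≫ Spec.map i) ⊆ Set.range X.ι := by
    rw [Scheme.Opens.range_ι]
    rintro _ ⟨y, rfl⟩
    have : Y.toSpecΓ y ∈ Spec.map i ⁻¹ᵁ X := hX ▸ ⟨y, rfl⟩
    rwa [Scheme.Hom.comp_apply]
  let r : Y ⟶ X.toScheme := IsOpenImmersion.lift X.ι (Y.toSpecΓ ≫ Spec.map i) hsub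
  have hr : r ≫ X.ι = Y.toSpecΓ ≫ Spec.map i := IsOpenImmersion.lift_fac _ _ _
  have h1 : IsPullback r Y.toSpecΓ X.ι (Spec.map i) := by
    refine (IsOpenImmersion.isPullback _ _ _ _ hr.symm ?_)
    rw [hX, Scheme.Opens.opensRange_ι]
  have h2 : IsPullback (Spec.map i) (Spec.map (globalMap p)) (Spec.map s)
      (Spec.map (CommRingCat.ofHom (algebraMap k K))) :=
    (isPullback_SpecMap_of_isPushout _ _ _ _ hpo).flip
  let q : X.toScheme ⟶ Spec (CommRingCat.of k) := X.ι ≫ Spec.map s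
  have h3 : IsPullback r p q (Spec.map (CommRingCat.ofHom (algebraMap k K))) := by
    have := h1.flip.paste_horiz h2.flip
    rw [toSpecΓ_globalMap] at this
    exact this.flip
  have hrinv : ∀ σ, (D.act σ).hom ≫ r = r := by
    intro σ
    rw [← cancel_mono X.ι, Category.assoc, hr, Scheme.toSpecΓ_naturality_assoc, ← Spec.map_comp,
      hinv]
  have hsurj : Surjective (Spec.map (CommRingCat.ofHom (algebraMap k K))) := by
    constructor
    intro x
    exact ⟨default, Subsingleton.elim (α := PrimeSpectrum k) _ _⟩
  have hflat : Flat (Spec.map (CommRingCat.ofHom (algebraMap k K))) := by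
    rw [Flat.SpecMap_iff]
    change (algebraMap k K).Flat
    rw [RingHom.flat_algebraMap_iff]
    infer_instance
  have hrs : Surjective r := MorphismProperty.of_isPullback h3.flip hsurj
  refine ⟨X.toScheme, q, h3.isoPullback, h3.isoPullback_hom_snd, ?_, ?_, ?_, ?_⟩
  · intro σ
    have key : ∀ a : Y ⟶ Y, a ≫ r = r → a ≫ p = p ≫ specAut k K σ →
        a ≫ h3.isoPullback.hom = h3.isoPullback.hom ≫ baseChangeAut k K q σ := by
      intro a ha hap
      refine pullback.hom_ext ?_ ?_
      · refine (Category.assoc _ _ _).trans (Eq.trans ?_ (Category.assoc _ _ _).symm)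
        have hb : baseChangeAut k K q σ ≫ pullback.fst q _ = pullback.fst q _ ≫ 𝟙 _ :=
          pullback.lift_fst _ _ _
        refine Eq.trans ?_ (congrArg (fun t => h3.isoPullback.hom ≫ t) hb).symm
        rw [h3.isoPullback_hom_fst, ha, Category.comp_id, h3.isoPullback_hom_fst]
      · refine (Category.assoc _ _ _).trans (Eq.trans ?_ (Category.assoc _ _ _).symm)
        have hb : baseChangeAut k K q σ ≫ pullback.snd q _ = pullback.snd q _ ≫ specAut k K σ :=
          pullback.lift_snd _ _ _
        refine Eq.trans ?_ (congrArg (fun t => h3.isoPullback.hom ≫ t) hb).symm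
        rw [h3.isoPullback_hom_snd, hap, h3.isoPullback_hom_snd_assoc]
    exact key _ (hrinv σ) (D.compat σ)
  · exact MorphismProperty.of_isPullback_of_descendsAlong (P := @LocallyOfFiniteType)
      (Q := @Surjective ⊓ @Flat ⊓ @QuasiCompact) h3.flip ⟨⟨hsurj, hflat⟩, inferInstance⟩ hft
  · have : CompactSpace X.toScheme := hrs.surj.compactSpace r.continuous
    exact quasiCompact_of_compactSpace q
  · exact ⟨Spec B₀, Spec.map s, X.ι, inferInstance, inferInstance, rfl⟩

lemma main_descent [CharZero k] [IsAlgClosed K] [IsIntegral Y]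
    (htr : ∀ L : IntermediateField k K, L.FG → ∃ x : K, Transcendental L x)
    (hqa : QuasiAffineOver K p) (D : DescentDatum k K Y p) (hcont : D.IsContinuous) :
    ∃ (X : Scheme) (q : X ⟶ Spec (CommRingCat.of k)) (e : Y ≅ baseChange k K q),
      e.hom ≫ pullback.snd q (Spec.map (CommRingCat.ofHom (algebraMap k K))) = p ∧
      (∀ σ : K ≃ₐ[k] K, (D.act σ).hom ≫ e.hom = e.hom ≫ baseChangeAut k K q σ) ∧
      QuasiAffineOver k q := by
  obtain ⟨hft, hqc, Z, qZ, j, hZ, hj, -⟩ := hqa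
  have hc : CompactSpace Y := QuasiCompact.compactSpace_of_compactSpace p
  have hqaff : Y.IsQuasiAffine := Scheme.IsQuasiAffine.of_isImmersion j
  letI := globalMulSemiringAction D
  letI := globalAlgebra p
  letI : Algebra k Γ(Y, ⊤) := ((globalMap p).hom.comp (algebraMap k K)).toAlgebra
  haveI : IsScalarTower k K Γ(Y, ⊤) := IsScalarTower.of_algebraMap_eq fun x => rfl
  have hsl := global_hsl D
  have hspan := global_span htr D hcont
  let B₀ : Subalgebra k Γ(Y, ⊤) :=
    { carrier := {b | ∀ σ : K ≃ₐ[k] K, σ • b = b}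
      mul_mem' := fun ha hb σ => by rw [smul_mul', ha σ, hb σ]
      add_mem' := fun ha hb σ => by rw [smul_add, ha σ, hb σ]
      algebraMap_mem' := fun r σ => by
        refine (globalMap_act D σ (algebraMap k K r)).trans ?_
        rw [σ.commutes]
        rfl }
  have hB₀ : ∀ b, b ∈ B₀ ↔ ∀ σ : K ≃ₐ[k] K, σ • b = b := fun b => Iff.rfl
  haveI := invariants_isPushout htr hsl hspan B₀ hB₀
  have hpo := CommRingCat.isPushout_of_isPushout k K B₀ Γ(Y, ⊤)
  have hideal := invariants_ideal htr hsl hspan B₀ hB₀ (boundaryIdeal Y)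
    (fun σ b hb => boundaryIdeal_stable (D.act σ⁻¹) b hb)
  obtain ⟨X, hX⟩ := exists_opens (CommRingCat.ofHom (algebraMap B₀ Γ(Y, ⊤))) hideal
  refine scheme_descent D hft (CommRingCat.ofHom (algebraMap B₀ Γ(Y, ⊤))) _ hpo ?_ X hX
  intro σ
  ext b
  have := b.2 σ⁻¹
  change (D.act σ⁻¹⁻¹ : Aut Y).hom.appTop b.1 = b.1 at this
  rwa [inv_inv] at this

end

/-- Weil descent for quasi-affine schemes: a continuous descent datum with
respect to `K/k` on an integral quasi-affine scheme over `K` is effective, and the descended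
scheme may be taken quasi-affine of finite type over `k`. -/
theorem weil_descent_quasiAffine
    (k K : Type) [Field k] [CharZero k] [Field K] [IsAlgClosed K] [Algebra k K]
    -- `K` has infinite transcendence degree over `k`
    (htr : ∀ L : IntermediateField k K, L.FG → ∃ x : K, Transcendental L x)
    (Y : Scheme) [IsIntegral Y] (p : Y ⟶ Spec (CommRingCat.of K))
    -- `Y` is quasi-affine over `K`
    (hqa : QuasiAffineOver K p)
    -- a continuous descent datum on `Y` with respect to `K/k`
    (D : DescentDatum k K Y p) (hcont : D.IsContinuous) :
    ∃ (X : Scheme) (q : X ⟶ Spec (CommRingCat.of k)) (e : Y ≅ baseChange k K q),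
      -- the isomorphism is over `Spec K`
      e.hom ≫ pullback.snd q (Spec.map (CommRingCat.ofHom (algebraMap k K))) = p ∧
      -- the action of each `σ` corresponds to `id_X × Spec (σ⁻¹)`
      (∀ σ : K ≃ₐ[k] K, (D.act σ).hom ≫ e.hom = e.hom ≫ baseChangeAut k K q σ) ∧
      -- `X` is quasi-affine of finite type over `k`
      QuasiAffineOver k q := by
  exact main_descent htr hqa D hcont

end Paper
end
end
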